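/- arXiv:2112.05081 — 2 statements merged into one kernel-verified Lean document; each statement's English description precedes it below -/
import Mathlib

section
/- Let K be a field of characteristic different from 2, let d ∈ K^× be a non-square, and let L = K(√d). Let Q₁ and Q₂ be quaternion algebras over K such that the biquaternion algebra Q₁ ⊗_K Q₂ is a division algebra, and suppose that (Q₁ ⊗_K Q₂) ⊗_K L is Brauer-equivalent to a quaternion algebra over L. Then there exist a, b, c ∈ K^× such that Q₁ ⊗_K Q₂ is Brauer-equivalent to (a,b)_K ⊗_K (c,d)_K; in particular, the class of Q₁ ⊗_K Q₂ in Br(K) equals the sum of the classes of the quaternion algebras (a,b)_K and (c,d)_K. -/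
open scoped TensorProduct Quaternion

/-- Two (associative, unital) algebras over a field `F` are *Brauer-equivalent* if they become
isomorphic as `F`-algebras after tensoring with (i.e. taking) matrix algebras of suitable
positive sizes. -/
def BrauerEquivalent (F : Type*) [Field F] (A B : Type*)
    [Ring A] [Algebra F A] [Ring B] [Algebra F B] : Prop :=
  ∃ n m : ℕ, 0 < n ∧ 0 < m ∧
    Nonempty (Matrix (Fin n) (Fin n) A ≃ₐ[F] Matrix (Fin m) (Fin m) B)

/-!
Write `D` for the biquaternion division algebra, of dimension 16. If `D` contained no square root
of `d`, then `D_L` would be a division algebra (up to a unit its elements are `c + √d`, a factor of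
`c² - d ≠ 0`), so no algebra of smaller dimension could be Brauer equivalent to it. Hence `x² = d`
for some `x ∈ D`.

The skew elements for the product of the canonical involutions are the sums of a pure quaternion of
each factor; with `conj (u + v) = -u + v`, the products `conj g * g` are scalars, the values of the
6-dimensional Albert form. Some `g ≠ 0` has `g` and `g * x` both skew: otherwise `x` would commute
with all of `D`. So `x = conj g * h` with `g, h` in the Albert space, and they are orthogonal as
`d` is not a square. Extending to five orthogonal vectors `g, h, u, v, w`, the elements
`conj g * h, conj g * u, conj g * v, conj g * w` square to scalars and anticommute pairwise, and
they split `D` as `(a, b) ⊗ (c, d)`.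
-/

open Module Matrix

section MatrixAlgebra

variable {F A B m n : Type*} [Field F] [Ring A] [Algebra F A] [Ring B] [Algebra F B]
  [Fintype m] [Fintype n]

lemma exists_linearMap_mul_ne_zero [NoZeroDivisors A] {X : Matrix n n A} (hX : X ≠ 0) :
    ∃ f : (n → A) →ₗ[F] Matrix n n A, ∀ v, v ≠ 0 → f v * X ≠ 0 := by
  classical
  obtain ⟨i, hi⟩ : ∃ i, X i ≠ 0 := by
    contrapose! hX
    exact funext hX
  refine ⟨vecMulVecBilin F F |>.flip (Pi.single i 1), fun v hv ↦ ?_⟩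
  have hrow : Pi.single i 1 ᵥ* X ≠ 0 := by simpa [Matrix.row] using hi
  simpa [vecMulVec_mul] using And.intro hv hrow

variable [DecidableEq m] [DecidableEq n]

/-- A nonzero left ideal of `Matrix n n A` contains a copy of `n → A`; take the one generated by a
matrix unit of `Matrix m m B`, which consists of matrices with a single nonzero column. -/
lemma card_mul_finrank_le_of_algEquiv [NoZeroDivisors A] [Module.Finite F A] [Nontrivial B]
    [Module.Finite F B] [Nonempty m] (φ : Matrix n n A ≃ₐ[F] Matrix m m B) :
    Fintype.card n * finrank F A ≤ Fintype.card m * finrank F B := by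
  let k : m := Classical.arbitrary m
  let E : Matrix m m B := Matrix.single k k 1
  have hE : E ≠ 0 := fun h ↦ one_ne_zero (α := B) (by simpa [E] using congrFun₂ h k k)
  obtain ⟨f, hf⟩ := exists_linearMap_mul_ne_zero (F := F) (X := φ.symm E) (by simpa using hE)
  let column : (n → A) →ₗ[F] m → B :=
    LinearMap.pi fun i ↦ (entryLinearMap F B i k) ∘ₗ φ.toLinearMap ∘ₗ f
  have hcolumn : Function.Injective column := by
    refine (injective_iff_map_eq_zero column).2 fun v hv ↦ by_contra fun hv0 ↦ hf v hv0 ?_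
    apply φ.injective
    ext i j
    have : φ (f v) i k = 0 := congrFun hv i
    rcases eq_or_ne j k with rfl | hj
    · simp [E, this]
    · simp [E, hj]
  simpa [finrank_pi_fintype] using LinearMap.finrank_le_finrank_of_injective hcolumn

end MatrixAlgebra

namespace BrauerEquivalent

variable {F A B : Type*} [Field F] [Ring A] [Algebra F A] [Ring B] [Algebra F B]

lemma of_algEquiv (φ : A ≃ₐ[F] B) : BrauerEquivalent F A B :=
  ⟨1, 1, one_pos, one_pos, ⟨φ.mapMatrix⟩⟩

theorem finrank_le [NoZeroDivisors A] [Module.Finite F A] [Nontrivial B] [Module.Finite F B]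
    (h : BrauerEquivalent F A B) : finrank F A ≤ finrank F B := by
  obtain ⟨n, m, -, hm, ⟨φ⟩⟩ := h
  have : NeZero m := ⟨hm.ne'⟩
  have hcol : n * finrank F A ≤ m * finrank F B := by
    simpa using card_mul_finrank_le_of_algEquiv φ
  have hdim : n * (n * finrank F A) = m * (m * finrank F B) := by
    simpa [finrank_matrix, mul_assoc] using φ.toLinearEquiv.finrank_eq
  have hpos : 0 < m * finrank F B := Nat.mul_pos hm finrank_pos
  have hmn : m ≤ n := Nat.le_of_mul_le_mul_right (hdim ▸ Nat.mul_le_mul_left n hcol) hpos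
  have : m * m * finrank F A ≤ m * m * finrank F B := by
    calc m * m * finrank F A ≤ n * n * finrank F A := by gcongr
      _ = m * m * finrank F B := by simpa only [mul_assoc] using hdim
  exact Nat.le_of_mul_le_mul_left this (Nat.mul_pos hm hm)

end BrauerEquivalent

section QuadraticExtension

variable {K L D : Type*} [Field K] [Field L] [Algebra K L] [Ring D] [Algebra K D]

lemma exists_eq_one_tmul_add_tmul (hL : finrank K L = 2) {δ : L}
    (hδ : δ ∉ Set.range (algebraMap K L)) (z : L ⊗[K] D) :
    ∃ x y : D, z = 1 ⊗ₜ x + δ ⊗ₜ y := by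
  have hli : LinearIndependent K ![1, δ] :=
    (LinearIndependent.pair_iff' one_ne_zero).2 fun r hr ↦
      hδ ⟨r, by rw [Algebra.algebraMap_eq_smul_one, hr]⟩
  let basis := basisOfLinearIndependentOfCardEqFinrank hli (by simp [hL])
  obtain ⟨c, rfl⟩ := TensorProduct.eq_repr_basis_left basis z
  exact ⟨c 0, c 1, by simp [Finsupp.sum_fintype, basis]⟩

theorem isUnit_tensorProduct_of_ne_zero (hL : finrank K L = 2) {d : K} {δ : L}
    (hδ : δ ^ 2 = algebraMap K L d) (hD : ∀ x : D, x ≠ 0 → IsUnit x)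
    (hd : ∀ c : D, c * c ≠ algebraMap K D d) {z : L ⊗[K] D} (hz : z ≠ 0) : IsUnit z := by
  have hδK : δ ∉ Set.range (algebraMap K L) := by
    rintro ⟨r, rfl⟩
    apply hd (algebraMap K D r)
    rw [← map_mul, ← pow_two]
    congr 1
    exact (algebraMap K L).injective (by rw [map_pow, hδ])
  have hunit : ∀ {x : D}, x ≠ 0 → IsUnit (1 ⊗ₜ[K] x : L ⊗[K] D) := fun hx ↦
    (hD _ hx).map Algebra.TensorProduct.includeRight
  obtain ⟨x, y, rfl⟩ := exists_eq_one_tmul_add_tmul hL hδK z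
  rcases eq_or_ne y 0 with rfl | hy
  · simp only [TensorProduct.tmul_zero, add_zero] at hz ⊢
    exact hunit (by rintro rfl; simp at hz)
  obtain ⟨u, rfl⟩ := hD y hy
  let c : D := x * ↑u⁻¹
  let s : L ⊗[K] D := 1 ⊗ₜ c
  let t : L ⊗[K] D := δ ⊗ₜ 1
  have hfactor : 1 ⊗ₜ x + δ ⊗ₜ (u : D) = (s + t) * 1 ⊗ₜ (u : D) := by
    simp [add_mul, s, t, c, mul_assoc]
  have hcomm : Commute s t := by simp [s, t, Commute, SemiconjBy]
  have htt : t * t = 1 ⊗ₜ algebraMap K D d := by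
    simp [t, ← pow_two, hδ, Algebra.algebraMap_eq_smul_one, TensorProduct.smul_tmul]
  have hnorm : (s + t) * (s - t) = 1 ⊗ₜ (c * c - algebraMap K D d) := by
    rw [← hcomm.mul_self_sub_mul_self_eq, htt, TensorProduct.tmul_sub]
    simp [s]
  have hcomm' : Commute (s + t) (s - t) := by
    rw [Commute, SemiconjBy, ← hcomm.mul_self_sub_mul_self_eq, ← hcomm.mul_self_sub_mul_self_eq']
  rw [hfactor]
  exact (hcomm'.isUnit_mul_iff.1 (hnorm ▸ hunit (sub_ne_zero.2 (hd c)))).1.mul (hunit hy)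

lemma noZeroDivisors_of_forall_isUnit {R : Type*} [MonoidWithZero R]
    (h : ∀ x : R, x ≠ 0 → IsUnit x) : NoZeroDivisors R where
  eq_zero_or_eq_zero_of_mul_eq_zero {x y} hxy := by
    refine or_iff_not_imp_left.2 fun hx ↦ ?_
    exact (h x hx).mul_right_eq_zero.1 hxy

theorem exists_mul_self_eq_of_brauerEquivalent [FiniteDimensional K D] {H : Type*} [Ring H]
    [Algebra L H] [Nontrivial H] [FiniteDimensional L H] (hL : finrank K L = 2) {d : K} {δ : L}
    (hδ : δ ^ 2 = algebraMap K L d) (hD : ∀ x : D, x ≠ 0 → IsUnit x)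
    (hH : finrank L H < finrank K D) (h : BrauerEquivalent L (L ⊗[K] D) H) :
    ∃ c : D, c * c = algebraMap K D d := by
  by_contra! hd
  have : NoZeroDivisors (L ⊗[K] D) :=
    noZeroDivisors_of_forall_isUnit fun _ ↦ isUnit_tensorProduct_of_ne_zero hL hδ hD hd
  exact hH.not_ge (by simpa using h.finrank_le)

end QuadraticExtension

section QuaternionAlgebra

open QuaternionAlgebra TensorProduct

variable {K A B : Type*} [Field K] [Ring A] [Algebra K A] [Ring B] [Algebra K B] {a b c d : K}

/-- The unnormalised average of `z` over conjugation by `1, i, j, k`, a projection (up to the factor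
`4 * (a * b)`) onto the centralizer of the quaternion basis. Products `u * z * u` replace the
conjugates `u * z * u⁻¹`, which the coefficients account for. -/
noncomputable def quaternionAverage (q : Basis A a 0 b) : A →ₗ[K] A :=
  (a * b) • LinearMap.id + b • LinearMap.mulLeftRight K (q.i, q.i) +
    a • LinearMap.mulLeftRight K (q.j, q.j) - LinearMap.mulLeftRight K (q.k, q.k)

lemma quaternionAverage_apply (q : Basis A a 0 b) (z : A) :
    quaternionAverage q z =
      (a * b) • z + b • (q.i * z * q.i) + a • (q.j * z * q.j) - q.k * z * q.k := by
  simp [quaternionAverage]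

lemma map_quaternionAverage (f : A →ₐ[K] B) (q : Basis A a 0 b) (z : A) :
    f (quaternionAverage q z) = quaternionAverage (q.compHom f) (f z) := by
  simp [quaternionAverage_apply]

lemma quaternionAverage_of_commute (q : Basis A a 0 b) {z : A} (hi : Commute z q.i)
    (hj : Commute z q.j) : quaternionAverage q z = (4 * (a * b)) • z := by
  have hk : Commute z q.k := q.i_mul_j ▸ hi.mul_right hj
  rw [quaternionAverage_apply, ← hi.eq, ← hj.eq, ← hk.eq, mul_assoc, mul_assoc, mul_assoc,
    q.i_mul_i, q.j_mul_j, q.k_mul_k]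
  simp only [zero_smul, add_zero, mul_smul_comm, mul_one, mul_neg]
  module

lemma quaternionAverage_self (x : ℍ[K,a,b]) :
    quaternionAverage (Basis.self K) x = (4 * (a * b)) • algebraMap K ℍ[K,a,b] x.re := by
  rw [quaternionAverage_apply]
  ext <;> simp <;> ring

/-- The `B`-linear extension of the real part to `ℍ[K,a,b] ⊗[K] B`. -/
noncomputable def tensorRe (a b : K) (B : Type*) [Ring B] [Algebra K B] :
    ℍ[K,a,b] ⊗[K] B →ₗ[K] B :=
  TensorProduct.lid K B ∘ₗ (reₗ a 0 b).rTensor B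

@[simp]
lemma tensorRe_tmul (x : ℍ[K,a,b]) (y : B) : tensorRe a b B (x ⊗ₜ y) = x.re • y := by
  simp [tensorRe]

/-- The quaternion basis `i ⊗ 1, j ⊗ 1` of the left factor. -/
noncomputable abbrev leftBasis (a b : K) (B : Type*) [Ring B] [Algebra K B] :
    Basis (ℍ[K,a,b] ⊗[K] B) a 0 b :=
  (Basis.self K).compHom Algebra.TensorProduct.includeLeft

lemma quaternionAverage_leftBasis (z : ℍ[K,a,b] ⊗[K] B) :
    quaternionAverage (leftBasis a b B) z = (4 * (a * b)) • (1 ⊗ₜ tensorRe a b B z) := by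
  induction z with
  | zero => simp
  | add z₁ z₂ h₁ h₂ => rw [map_add, map_add, h₁, h₂, tmul_add, smul_add]
  | tmul x y =>
    calc quaternionAverage (leftBasis a b B) (x ⊗ₜ y)
        = quaternionAverage (Basis.self K) x ⊗ₜ y := by
          simp [quaternionAverage_apply, smul_tmul', add_tmul, sub_tmul]
      _ = (4 * (a * b)) • (1 ⊗ₜ tensorRe a b B (x ⊗ₜ y)) := by
          rw [quaternionAverage_self, Algebra.algebraMap_eq_smul_one, ← smul_tmul',
            ← smul_tmul', tensorRe_tmul, tmul_smul]

lemma eq_zero_of_tensorRe_mul_eq_zero (ha : a ≠ 0) (hb : b ≠ 0) {z : ℍ[K,a,b] ⊗[K] B}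
    (hz : ∀ x : ℍ[K,a,b], tensorRe a b B (x ⊗ₜ 1 * z) = 0) : z = 0 := by
  obtain ⟨y, rfl⟩ := TensorProduct.eq_repr_basis_left (basisOneIJK a 0 b) z
  have hre (x : ℍ[K,a,b]) : ∑ n, (x * basisOneIJK a 0 b n).re • y n = 0 := by
    simpa [Finsupp.sum_fintype, Finset.mul_sum] using hz x
  have hbasis : ⇑(basisOneIJK a 0 b) = ![1, ⟨0, 1, 0, 0⟩, ⟨0, 0, 1, 0⟩, ⟨0, 0, 0, 1⟩] := by
    funext n
    rw [Module.Basis.apply_eq_iff]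
    ext m
    fin_cases n <;> fin_cases m <;> simp
  have h₀ : y 0 = 0 := by simpa [Fin.sum_univ_four, hbasis] using hre ⟨1, 0, 0, 0⟩
  have h₁ : y 1 = 0 := by simpa [Fin.sum_univ_four, hbasis, ha] using hre ⟨0, 1, 0, 0⟩
  have h₂ : y 2 = 0 := by simpa [Fin.sum_univ_four, hbasis, hb] using hre ⟨0, 0, 1, 0⟩
  have h₃ : y 3 = 0 := by simpa [Fin.sum_univ_four, hbasis, ha, hb] using hre ⟨0, 0, 0, 1⟩
  simp [Finsupp.sum_fintype, Fin.sum_univ_four, h₀, h₁, h₂, h₃]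

lemma commute_liftHom (q : Basis A a 0 b) {z : A} (hi : Commute z q.i) (hj : Commute z q.j)
    (x : ℍ[K,a,b]) : Commute z (q.liftHom x) := by
  have hk : Commute z q.k := q.i_mul_j ▸ hi.mul_right hj
  rw [Basis.liftHom_apply, Basis.lift]
  have hre : Commute z (algebraMap K A x.re) := (Algebra.commutes x.re z).symm
  exact ((hre.add_right (hi.smul_right _)).add_right
    (hj.smul_right _)).add_right (hk.smul_right _)

lemma four_mul_mul_ne_zero [NeZero (2 : K)] (ha : a ≠ 0) (hb : b ≠ 0) : 4 * (a * b) ≠ 0 := by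
  have hfour : (4 : K) = 2 * 2 := by norm_num
  simp [hfour, ha, hb, two_ne_zero]

variable [NeZero (2 : K)]

theorem injective_of_injective_comp_includeRight (ha : a ≠ 0) (hb : b ≠ 0)
    (f : ℍ[K,a,b] ⊗[K] B →ₐ[K] A)
    (hf : Function.Injective (f.comp Algebra.TensorProduct.includeRight)) :
    Function.Injective f := by
  refine (injective_iff_map_eq_zero f).2 fun z hz ↦
    eq_zero_of_tensorRe_mul_eq_zero ha hb fun x ↦ (injective_iff_map_eq_zero _).1 hf _ ?_
  have haverage : f (quaternionAverage (leftBasis a b B) (x ⊗ₜ 1 * z)) = 0 := by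
    rw [map_quaternionAverage, map_mul, hz, mul_zero, map_zero]
  rw [quaternionAverage_leftBasis, map_smul] at haverage
  exact (smul_eq_zero.1 haverage).resolve_left (four_mul_mul_ne_zero ha hb)

lemma exists_one_tmul_eq_of_commute (ha : a ≠ 0) (hb : b ≠ 0) {z : ℍ[K,a,b] ⊗[K] B}
    (hi : Commute z ((Basis.self K).i ⊗ₜ 1)) (hj : Commute z ((Basis.self K).j ⊗ₜ 1)) :
    ∃ y : B, 1 ⊗ₜ y = z := by
  have haverage := quaternionAverage_leftBasis z
  rw [quaternionAverage_of_commute _ hi hj] at haverage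
  exact ⟨_, (smul_right_injective _ (four_mul_mul_ne_zero ha hb) haverage).symm⟩

lemma exists_algebraMap_eq_of_commute (ha : a ≠ 0) (hb : b ≠ 0) (hc : c ≠ 0) (hd : d ≠ 0)
    {z : ℍ[K,a,b] ⊗[K] ℍ[K,c,d]}
    (hi₁ : Commute z ((Basis.self K).i ⊗ₜ 1)) (hj₁ : Commute z ((Basis.self K).j ⊗ₜ 1))
    (hi₂ : Commute z (1 ⊗ₜ (Basis.self K).i)) (hj₂ : Commute z (1 ⊗ₜ (Basis.self K).j)) :
    ∃ r : K, algebraMap K _ r = z := by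
  obtain ⟨y, rfl⟩ := exists_one_tmul_eq_of_commute ha hb hi₁ hj₁
  have hy {w : ℍ[K,c,d]} (hw : Commute (1 ⊗ₜ y : ℍ[K,a,b] ⊗[K] ℍ[K,c,d]) (1 ⊗ₜ w)) :
      Commute y w :=
    hw.of_map (f := (Algebra.TensorProduct.includeRight : _ →ₐ[K] ℍ[K,a,b] ⊗[K] ℍ[K,c,d]))
      (Algebra.TensorProduct.includeRight_injective (algebraMap K ℍ[K,a,b]).injective)
  have haverage := quaternionAverage_of_commute _ (hy hi₂) (hy hj₂)
  rw [quaternionAverage_self] at haverage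
  have hre := smul_right_injective _ (four_mul_mul_ne_zero hc hd) haverage
  exact ⟨y.re, by rw [← Algebra.TensorProduct.includeRight.commutes, hre]; rfl⟩

lemma quaternionAlgHom_injective [Nontrivial A] (ha : a ≠ 0) (hb : b ≠ 0) (f : ℍ[K,a,b] →ₐ[K] A) :
    Function.Injective f := by
  let r := Algebra.TensorProduct.rid K K ℍ[K,a,b]
  have := injective_of_injective_comp_includeRight ha hb (f.comp r.toAlgHom) (RingHom.injective _)
  simpa using! this.comp r.symm.injective

theorem nonempty_algEquiv_of_commute [Nontrivial A] (ha : a ≠ 0) (hb : b ≠ 0) (hc : c ≠ 0)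
    (hd : d ≠ 0) (hA : finrank K A = 16) (p : Basis A a 0 b) (q : Basis A c 0 d)
    (hii : Commute p.i q.i) (hij : Commute p.i q.j) (hji : Commute p.j q.i)
    (hjj : Commute p.j q.j) : Nonempty (A ≃ₐ[K] ℍ[K,a,b] ⊗[K] ℍ[K,c,d]) := by
  have hcomm (x : ℍ[K,a,b]) (y : ℍ[K,c,d]) : Commute (p.liftHom x) (q.liftHom y) :=
    commute_liftHom q (commute_liftHom p hii.symm hji.symm x).symm
      (commute_liftHom p hij.symm hjj.symm x).symm y
  let f := Algebra.TensorProduct.lift p.liftHom q.liftHom hcomm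
  have hf : Function.Injective f := by
    apply injective_of_injective_comp_includeRight ha hb
    simpa [f] using! quaternionAlgHom_injective hc hd q.liftHom
  have : FiniteDimensional K A := .of_finrank_eq_succ hA
  have hdim : finrank K (ℍ[K,a,b] ⊗[K] ℍ[K,c,d]) = finrank K A := by
    simp [hA, QuaternionAlgebra.finrank_eq_four]
  exact ⟨(AlgEquiv.ofBijective f ⟨hf, (LinearMap.injective_iff_surjective_of_finrank_eq_finrank
    (f := f.toLinearMap) hdim).1 hf⟩).symm⟩

end QuaternionAlgebra

section Anticommuting

lemma commute_mul_of_anticommute {M : Type*} [Semigroup M] [HasDistribNeg M] {x y z : M}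
    (hx : x * z = -(z * x)) (hy : y * z = -(z * y)) : Commute (x * y) z := by
  rw [Commute, SemiconjBy, mul_assoc, hy, mul_neg, ← mul_assoc, hx, neg_mul, neg_neg, mul_assoc]

variable {K A : Type*} [Field K] [Ring A] [Algebra K A]

/-- The quaternion basis formed by two anticommuting square roots of scalars. -/
def quaternionBasis {a b : K} {x y : A} (hx : x * x = algebraMap K A a)
    (hy : y * y = algebraMap K A b) (hxy : x * y = -(y * x)) :
    QuaternionAlgebra.Basis A a 0 b where
  i := x
  j := y
  k := x * y
  i_mul_i := by rw [hx, Algebra.algebraMap_eq_smul_one, zero_smul, add_zero]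
  j_mul_j := by rw [hy, Algebra.algebraMap_eq_smul_one]
  i_mul_j := rfl
  j_mul_i := by rw [hxy, zero_smul, zero_sub, neg_neg]

/-- With `t = e 0 * e 1`, the pairs `t * e 2, t * e 3` and `e 1, e 0` generate commuting quaternion
algebras. -/
theorem exists_algEquiv_of_pairwise_anticommute [NeZero (2 : K)] (hA : finrank K A = 16)
    {e : Fin 4 → A} {q : Fin 4 → K} (hq : ∀ i, q i ≠ 0)
    (he : ∀ i, e i * e i = algebraMap K A (q i))
    (hanti : Pairwise fun i j ↦ e i * e j = -(e j * e i)) :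
    ∃ a b c : K, a ≠ 0 ∧ b ≠ 0 ∧ c ≠ 0 ∧
      Nonempty (A ≃ₐ[K] ℍ[K,a,b] ⊗[K] ℍ[K,c,q 0]) := by
  have : Nontrivial A := nontrivial_of_finrank_pos (R := K) (by simp [hA])
  have h23 : e 2 * e 3 = -(e 3 * e 2) := hanti (by decide)
  let p := quaternionBasis (he 0) (he 1) (hanti (by decide))
  let t := p.k
  have htt : t * t = algebraMap K A (-(q 0 * q 1)) := by
    simp [t, Algebra.algebraMap_eq_smul_one]
  have ht0 : t * e 0 = -(e 0 * t) := by
    change p.k * p.i = -(p.i * p.k)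
    simp
  have ht1 : t * e 1 = -(e 1 * t) := by
    change p.k * p.j = -(p.j * p.k)
    simp
  have ht2 : Commute t (e 2) := commute_mul_of_anticommute (hanti (by decide)) (hanti (by decide))
  have ht3 : Commute t (e 3) := commute_mul_of_anticommute (hanti (by decide)) (hanti (by decide))
  have hsq {i : Fin 4} (hi : Commute t (e i)) :
      t * e i * (t * e i) = algebraMap K A (-(q 0 * q 1) * q i) := by
    rw [hi.symm.mul_mul_mul_comm, htt, he, map_mul]
  have hmul : t * e 2 * (t * e 3) = -(t * e 3 * (t * e 2)) := by
    rw [ht2.symm.mul_mul_mul_comm, ht3.symm.mul_mul_mul_comm, h23, mul_neg]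
  refine ⟨_, _, q 1, ?_, ?_, hq 1, nonempty_algEquiv_of_commute ?_ ?_ (hq 1) (hq 0) hA
    (quaternionBasis (hsq ht2) (hsq ht3) hmul) (quaternionBasis (he 1) (he 0) (hanti (by decide)))
    (commute_mul_of_anticommute ht1 (hanti (by decide)))
    (commute_mul_of_anticommute ht0 (hanti (by decide)))
    (commute_mul_of_anticommute ht1 (hanti (by decide)))
    (commute_mul_of_anticommute ht0 (hanti (by decide)))⟩ <;>
  simp [hq]

end Anticommuting

section QuadraticForm

open QuadraticMap

variable {K V W A B D : Type*} [Field K] [AddCommGroup V] [Module K V] [AddCommGroup W] [Module K W]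
  [Ring A] [Algebra K A] [Ring B] [Algebra K B] [Ring D] [Algebra K D] {Q : QuadraticForm K V}

lemma exists_ne_zero_polar_eq_zero [FiniteDimensional K V] (Q : QuadraticForm K V) {n : ℕ}
    (hn : n < finrank K V) (v : Fin n → V) : ∃ w, w ≠ 0 ∧ ∀ i, polar Q (v i) w = 0 := by
  let f : V →ₗ[K] Fin n → K := LinearMap.pi fun i ↦ polarBilin Q (v i)
  obtain ⟨w, hw, hw0⟩ := (Submodule.ne_bot_iff _).1
    (LinearMap.ker_ne_bot_of_finrank_lt (f := f) (by simpa using hn))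
  exact ⟨w, hw0, fun i ↦ by simpa [f] using (congrFun hw i : f w i = 0)⟩

lemma exists_orthogonal_extension [FiniteDimensional K V] (Q : QuadraticForm K V) {n : ℕ}
    {v : Fin n → V} (hv0 : ∀ i, v i ≠ 0) (hv : Pairwise fun i j ↦ polar Q (v i) (v j) = 0)
    {m : ℕ} (hnm : n ≤ m) (hm : m ≤ finrank K V) :
    ∃ u : Fin m → V, (∀ i, u (Fin.castLE hnm i) = v i) ∧ (∀ i, u i ≠ 0) ∧
      Pairwise fun i j ↦ polar Q (u i) (u j) = 0 := by
  induction m, hnm using Nat.le_induction with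
  | base => exact ⟨v, fun _ ↦ rfl, hv0, hv⟩
  | succ m hnm ih =>
    obtain ⟨u, huv, hu0, hu⟩ := ih (by lia)
    obtain ⟨w, hw0, hw⟩ := exists_ne_zero_polar_eq_zero Q (by lia) u
    refine ⟨Fin.snoc u w, fun i ↦ ?_, fun i ↦ ?_, fun i j hij ↦ ?_⟩
    · rw [← huv i]
      exact Fin.snoc_castSucc (α := fun _ ↦ V) w u (Fin.castLE hnm i)
    · cases i using Fin.lastCases <;> simp [hw0, hu0]
    · cases i using Fin.lastCases <;> cases j using Fin.lastCases
      · exact absurd rfl hij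
      · simpa [polar_comm Q w] using hw _
      · simpa using hw _
      · simpa using hu (by simpa using hij)

/-- A pair of linear maps `ι, conj : V → D` with `conj v * ι v = ι v * conj v = Q v`: equivalently,
a linear map sending `v` to the off-diagonal matrix `!![0, conj v; ι v, 0]`, whose square is `Q v`,
that is, a representation of the Clifford algebra of `Q` on `D × D`. -/
structure CliffordPair (Q : QuadraticForm K V) (D : Type*) [Ring D] [Algebra K D] where
  ι : V →ₗ[K] D
  conj : V →ₗ[K] D
  conj_mul_self (v : V) : conj v * ι v = algebraMap K D (Q v)
  self_mul_conj (v : V) : ι v * conj v = algebraMap K D (Q v)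

namespace CliffordPair

/-- The pair `f v ⊗ 1 + 1 ⊗ g w`, `-f v ⊗ 1 + 1 ⊗ g w` attached to linear maps `f, g` which are
square roots of the forms `Q, R`. -/
noncomputable def tensor {R : QuadraticForm K W} (f : V →ₗ[K] A) (g : W →ₗ[K] B)
    (hf : ∀ v, f v * f v = algebraMap K A (Q v)) (hg : ∀ w, g w * g w = algebraMap K B (R w)) :
    CliffordPair ((-Q).prod R) (A ⊗[K] B) where
  ι := (Algebra.TensorProduct.includeLeft.toLinearMap ∘ₗ f).coprod
    (Algebra.TensorProduct.includeRight.toLinearMap ∘ₗ g)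
  conj := (-(Algebra.TensorProduct.includeLeft.toLinearMap ∘ₗ f)).coprod
    (Algebra.TensorProduct.includeRight.toLinearMap ∘ₗ g)
  conj_mul_self v := by
    simp [add_mul, mul_add, hf, hg, TensorProduct.add_tmul, TensorProduct.neg_tmul,
      Algebra.TensorProduct.tmul_one_eq_one_tmul]
  self_mul_conj v := by
    simp [add_mul, mul_add, hf, hg, TensorProduct.add_tmul, TensorProduct.neg_tmul,
      Algebra.TensorProduct.tmul_one_eq_one_tmul, add_left_comm, add_assoc]

variable (C : CliffordPair Q D)

lemma anisotropic [NoZeroDivisors D] (hι : Function.Injective C.ι)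
    (hconj : Function.Injective C.conj) : Q.Anisotropic := by
  intro v hv
  have hmul := C.conj_mul_self v
  rwa [hv, map_zero, mul_eq_zero, map_eq_zero_iff _ hι, map_eq_zero_iff _ hconj, or_self] at hmul

lemma conj_mul_add_swap (v w : V) :
    C.conj v * C.ι w + C.conj w * C.ι v = algebraMap K D (polar Q v w) := by
  have h := C.conj_mul_self (v + w)
  simp only [map_add, add_mul, mul_add, C.conj_mul_self] at h
  simp only [polar, map_sub, ← h]
  abel

lemma self_mul_conj_add_swap (v w : V) :
    C.ι v * C.conj w + C.ι w * C.conj v = algebraMap K D (polar Q v w) := by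
  have h := C.self_mul_conj (v + w)
  simp only [map_add, add_mul, mul_add, C.self_mul_conj] at h
  simp only [polar, map_sub, ← h]
  abel

lemma conj_mul_anticomm {v w : V} (h : polar Q v w = 0) :
    C.conj v * C.ι w = -(C.conj w * C.ι v) :=
  eq_neg_of_add_eq_zero_left (by rw [C.conj_mul_add_swap, h, map_zero])

lemma self_mul_conj_anticomm {v w : V} (h : polar Q v w = 0) :
    C.ι v * C.conj w = -(C.ι w * C.conj v) :=
  eq_neg_of_add_eq_zero_left (by rw [C.self_mul_conj_add_swap, h, map_zero])

lemma conj_mul_mul_conj_mul {g v : V} (h : polar Q g v = 0) (w : V) :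
    C.conj g * C.ι v * (C.conj g * C.ι w) = -(Q g • (C.conj v * C.ι w)) := by
  calc C.conj g * C.ι v * (C.conj g * C.ι w) = C.conj g * (C.ι v * C.conj g) * C.ι w := by
        simp only [mul_assoc]
    _ = -(C.conj g * C.ι g * (C.conj v * C.ι w)) := by
        rw [C.self_mul_conj_anticomm (polar_comm Q g v ▸ h)]
        simp only [mul_neg, neg_mul, mul_assoc]
    _ = -(Q g • (C.conj v * C.ι w)) := by rw [C.conj_mul_self, Algebra.smul_def]

lemma polar_eq_zero_of_sq_eq [Nontrivial D] {d : K} (hd : ¬IsSquare d) {g h : V}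
    (hsq : C.conj g * C.ι h * (C.conj g * C.ι h) = algebraMap K D d) : polar Q g h = 0 := by
  set a := C.conj g * C.ι h
  set t := polar Q g h
  have hnorm : C.conj h * C.ι g * a = algebraMap K D (Q g * Q h) := by
    calc C.conj h * C.ι g * a = C.conj h * (C.ι g * C.conj g) * C.ι h := by
          simp only [a, mul_assoc]
      _ = algebraMap K D (Q g * Q h) := by
          rw [C.self_mul_conj, ← Algebra.commutes, mul_assoc, C.conj_mul_self, map_mul]
  have hlin : t • a = algebraMap K D (d + Q g * Q h) := by
    rw [map_add, ← hsq, ← hnorm, ← add_mul, C.conj_mul_add_swap, Algebra.smul_def]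
  by_contra ht
  obtain ⟨r, hr⟩ : ∃ r : K, algebraMap K D r = a :=
    ⟨t⁻¹ * (d + Q g * Q h), by rw [map_mul, ← hlin, ← Algebra.smul_def, inv_smul_smul₀ ht]⟩
  refine hd ⟨r, (algebraMap K D).injective ?_⟩
  rw [map_mul, hr, hsq]

theorem exists_algEquiv_of_sq_eq [NeZero (2 : K)] [FiniteDimensional K V] (hV : 5 ≤ finrank K V)
    (hQ : Q.Anisotropic) (hD : finrank K D = 16) {d : K} (hd : ¬IsSquare d) {g h : V}
    (hg : g ≠ 0) (hh : h ≠ 0)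
    (hsq : C.conj g * C.ι h * (C.conj g * C.ι h) = algebraMap K D d) :
    ∃ a b c : K, a ≠ 0 ∧ b ≠ 0 ∧ c ≠ 0 ∧ Nonempty (D ≃ₐ[K] ℍ[K,a,b] ⊗[K] ℍ[K,c,d]) := by
  have : Nontrivial D := nontrivial_of_finrank_pos (R := K) (by simp [hD])
  have hgh : polar Q g h = 0 := C.polar_eq_zero_of_sq_eq hd hsq
  obtain ⟨u, hgh', hu0, hu⟩ := exists_orthogonal_extension Q (v := ![g, h])
    (by simp [Fin.forall_fin_two, hg, hh])
    (by intro i j hij; fin_cases i <;> fin_cases j <;> simp_all [polar_comm Q h]) (by simp) hV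
  obtain rfl : u 0 = g := hgh' 0
  obtain rfl : u 1 = h := hgh' 1
  have horth (i : Fin 4) : polar Q (u 0) (u i.succ) = 0 := hu (Fin.succ_ne_zero i).symm
  let q (i : Fin 4) : K := -(Q (u 0) * Q (u i.succ))
  let e (i : Fin 4) : D := C.conj (u 0) * C.ι (u i.succ)
  have hq (i) : q i ≠ 0 := neg_ne_zero.2 (mul_ne_zero (mt (hQ _) (hu0 _)) (mt (hQ _) (hu0 _)))
  have he (i) : e i * e i = algebraMap K D (q i) := by
    rw [C.conj_mul_mul_conj_mul (horth i), C.conj_mul_self]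
    simp [q, Algebra.smul_def]
  have hanti : Pairwise fun i j ↦ e i * e j = -(e j * e i) := fun i j hij ↦ by
    simp only [e, C.conj_mul_mul_conj_mul (horth _), smul_neg,
      C.conj_mul_anticomm (hu ((Fin.succ_injective 4).ne hij))]
  have hq0 : q 0 = d := (algebraMap K D).injective (by rw [← he, ← hsq]; rfl)
  exact hq0 ▸ exists_algEquiv_of_pairwise_anticommute hD hq he hanti

end CliffordPair

end QuadraticForm

section Involution

variable {R A B : Type*}

/-- The tensor product of two involutions. -/
noncomputable instance instStarRingTensorProduct [CommRing R] [StarRing R] [Ring A] [StarRing A]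
    [Algebra R A] [StarModule R A] [Ring B] [StarRing B] [Algebra R B] [StarModule R B] :
    StarRing (A ⊗[R] B) where
  star_add := star_add
  star_mul x y := by
    induction x with
    | zero => simp
    | add x₁ x₂ h₁ h₂ => rw [add_mul, star_add, h₁, h₂, star_add, mul_add]
    | tmul a b =>
      induction y with
      | zero => simp
      | add y₁ y₂ h₁ h₂ => rw [mul_add, star_add, h₁, h₂, star_add, add_mul]
      | tmul => simp

variable [Ring A] [StarRing A] {a v w : A}

open skewAdjoint

lemma star_mul_add_mul_mem_skewAdjoint (hv : v ∈ skewAdjoint A) :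
    star a * v + v * a ∈ skewAdjoint A := by
  rw [mem_iff] at hv ⊢
  simp [hv]

lemma star_mul_add_mul_mul_mem_skewAdjoint (hv : v ∈ skewAdjoint A) (ha : IsSelfAdjoint (a * a))
    (hav : Commute (a * a) v) : (star a * v + v * a) * a ∈ skewAdjoint A := by
  rw [mem_iff] at hv ⊢
  rw [add_mul, mul_assoc v, star_add, star_mul v, ha.star_eq, hv, mul_neg, hav.eq]
  simp [hv, mul_assoc, add_comm]

/-- Since `v * w` is again skew, moving `a` past `v * w` either at once or factor by factor gives
`star a * v = v * star a`. -/
lemma commute_of_forall_star_mul_add_mul_eq_zero [NoZeroDivisors A] (hv : v ∈ skewAdjoint A)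
    (hw : w ∈ skewAdjoint A) (hw0 : w ≠ 0) (hvw : v * w = -(w * v))
    (ha : ∀ x ∈ skewAdjoint A, star a * x + x * a = 0) : Commute a v := by
  have hvw' : v * w ∈ skewAdjoint A := by
    rw [mem_iff] at hv hw ⊢
    rw [star_mul, hv, hw, neg_mul_neg, hvw, neg_neg]
  have hstar : star a * v = v * star a := by
    apply mul_right_cancel₀ hw0
    calc star a * v * w = -(v * (w * a)) := by
          rw [mul_assoc, eq_neg_of_add_eq_zero_left (ha _ hvw'), mul_assoc]
      _ = v * star a * w := by
          rw [eq_neg_of_add_eq_zero_right (ha w hw), mul_neg, neg_neg, mul_assoc]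
  have hcomm : v * a = a * v := by
    simpa [mem_iff.1 hv] using congrArg star hstar
  exact hcomm.symm

lemma commute_quaternionBasis_of_forall_star_mul_add_mul_eq_zero [Nontrivial A] [NoZeroDivisors A]
    {K : Type*} [Field K] [Algebra K A] {b c : K} (hb : b ≠ 0) (hc : c ≠ 0)
    (q : QuaternionAlgebra.Basis A b 0 c) (hi : q.i ∈ skewAdjoint A) (hj : q.j ∈ skewAdjoint A)
    (ha : ∀ x ∈ skewAdjoint A, star a * x + x * a = 0) : Commute a q.i ∧ Commute a q.j := by
  have hi0 : q.i ≠ 0 := left_ne_zero_of_mul (b := q.i) (by simp [q.i_mul_i, hb])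
  have hj0 : q.j ≠ 0 := left_ne_zero_of_mul (b := q.j) (by simp [q.j_mul_j, hc])
  exact ⟨commute_of_forall_star_mul_add_mul_eq_zero hi hj hj0 (by simp) ha,
    commute_of_forall_star_mul_add_mul_eq_zero hj hi hi0 (by simp) ha⟩

end Involution

section Biquaternion

open QuaternionAlgebra TensorProduct

variable {K : Type*} [Field K] {a b c d : K}

-- With the trivial star on `K`, `star` is the tensor product of the two canonical involutions.
attribute [local instance] starRingOfComm

local instance : StarModule K ℍ[K,a,b] where
  star_smul := QuaternionAlgebra.star_smul'

local notation "D" => ℍ[K,a,b] ⊗[K] ℍ[K,c,d]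

lemma tmul_one_mem_skewAdjoint {x : ℍ[K,a,b]} (hx : x.re = 0) :
    (x ⊗ₜ 1 : D) ∈ skewAdjoint D := by
  rw [skewAdjoint.mem_iff, star_tmul, star_eq_two_re_sub x, hx]
  simp [neg_tmul]

lemma one_tmul_mem_skewAdjoint {y : ℍ[K,c,d]} (hy : y.re = 0) :
    (1 ⊗ₜ y : D) ∈ skewAdjoint D := by
  rw [skewAdjoint.mem_iff, star_tmul, star_eq_two_re_sub y, hy]
  simp [tmul_neg]

theorem exists_skewAdjoint_mul_mem_skewAdjoint [NeZero (2 : K)] [NoZeroDivisors D]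
    (ha : a ≠ 0) (hb : b ≠ 0) (hc : c ≠ 0) (hd : d ≠ 0) {e : K} (he : ¬IsSquare e) {x : D}
    (hx : x * x = algebraMap K D e) :
    ∃ g ∈ skewAdjoint D, g ≠ 0 ∧ g * x ∈ skewAdjoint D := by
  by_contra! hskew
  have hzero (v) (hv : v ∈ skewAdjoint D) : star x * v + v * x = 0 := by
    by_contra hne
    refine hskew _ (star_mul_add_mul_mem_skewAdjoint hv) hne
      (star_mul_add_mul_mul_mem_skewAdjoint hv ?_ (hx ▸ Algebra.commutes e v))
    rw [hx]
    exact (algebraMap_star_comm e).symm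
  have hleft := commute_quaternionBasis_of_forall_star_mul_add_mul_eq_zero ha hb
    (leftBasis a b ℍ[K,c,d]) (tmul_one_mem_skewAdjoint rfl) (tmul_one_mem_skewAdjoint rfl) hzero
  have hright := commute_quaternionBasis_of_forall_star_mul_add_mul_eq_zero hc hd
    ((Basis.self K).compHom (Algebra.TensorProduct.includeRight : _ →ₐ[K] D))
    (one_tmul_mem_skewAdjoint rfl) (one_tmul_mem_skewAdjoint rfl) hzero
  obtain ⟨r, rfl⟩ := exists_algebraMap_eq_of_commute ha hb hc hd hleft.1 hleft.2 hright.1 hright.2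
  exact he ⟨r, (algebraMap K D).injective (by rw [map_mul, hx])⟩

/-- The pure quaternion `v 0 * i + v 1 * j + v 2 * k`. -/
def pureQuaternion (a b : K) : (Fin 3 → K) →ₗ[K] ℍ[K,a,b] where
  toFun v := ⟨0, v 0, v 1, v 2⟩
  map_add' v w := by ext <;> simp
  map_smul' r v := by ext <;> simp

lemma pureQuaternion_injective (a b : K) : Function.Injective (pureQuaternion a b) := fun v w h ↦ by
  rw [QuaternionAlgebra.ext_iff] at h
  funext n
  fin_cases n
  exacts [h.2.1, h.2.2.1, h.2.2.2]

lemma pureQuaternion_mul_self (a b : K) (v : Fin 3 → K) :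
    pureQuaternion a b v * pureQuaternion a b v =
      algebraMap K _ (QuadraticMap.weightedSumSquares K ![a, b, -(a * b)] v) := by
  ext <;> simp [pureQuaternion, QuadraticMap.weightedSumSquares_apply, Fin.sum_univ_three] <;> ring

lemma pureQuaternion_two_mul_im (x : ℍ[K,a,b]) :
    pureQuaternion a b ![2 * x.imI, 2 * x.imJ, 2 * x.imK] = x - star x := by
  ext <;> simp [pureQuaternion, two_mul]

/-- The Albert form of `(a,b) ⊗ (c,d)`: the difference of the squares of two pure quaternions. -/
noncomputable def albertForm (a b c d : K) : QuadraticForm K ((Fin 3 → K) × (Fin 3 → K)) :=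
  (-QuadraticMap.weightedSumSquares K ![a, b, -(a * b)]).prod
    (QuadraticMap.weightedSumSquares K ![c, d, -(c * d)])

/-- The sum `x ⊗ 1 + 1 ⊗ y` of two pure quaternions, with conjugate `-x ⊗ 1 + 1 ⊗ y`. -/
noncomputable def albertPair (a b c d : K) :
    CliffordPair (albertForm a b c d) (ℍ[K,a,b] ⊗[K] ℍ[K,c,d]) :=
  .tensor (pureQuaternion a b) (pureQuaternion c d) (pureQuaternion_mul_self a b)
    (pureQuaternion_mul_self c d)

lemma albertPair_ι_apply (v : (Fin 3 → K) × (Fin 3 → K)) :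
    (albertPair a b c d).ι v = pureQuaternion a b v.1 ⊗ₜ 1 + 1 ⊗ₜ pureQuaternion c d v.2 :=
  rfl

lemma albertPair_conj_apply (v : (Fin 3 → K) × (Fin 3 → K)) :
    (albertPair a b c d).conj v = (albertPair a b c d).ι (-v.1, v.2) := by
  simp [albertPair, CliffordPair.tensor, neg_tmul]

lemma albertPair_ι_injective : Function.Injective (albertPair a b c d).ι := by
  refine (injective_iff_map_eq_zero _).2 fun v hv ↦ ?_
  rw [albertPair_ι_apply] at hv
  have hre := congrArg (tensorRe a b ℍ[K,c,d]) hv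
  have hright : v.2 = 0 := pureQuaternion_injective c d <| by
    simpa [show (pureQuaternion a b v.1).re = 0 from rfl] using hre
  have hleft : v.1 = 0 := pureQuaternion_injective a b <|
    Algebra.TensorProduct.includeLeft_injective (S := K) (algebraMap K ℍ[K,c,d]).injective
      (by simpa [hright] using hv)
  exact Prod.ext hleft hright

theorem albertForm_anisotropic [NoZeroDivisors D] : (albertForm a b c d).Anisotropic := by
  refine (albertPair a b c d).anisotropic albertPair_ι_injective fun v w h ↦ ?_
  simpa [Prod.ext_iff] using albertPair_ι_injective
    ((albertPair_conj_apply v).symm.trans (h.trans (albertPair_conj_apply w)))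

lemma exists_albertPair_ι_eq_sub_star (x : D) : ∃ v, (albertPair a b c d).ι v = x - star x := by
  change x - star x ∈ LinearMap.range (albertPair a b c d).ι
  induction x with
  | zero => simp
  | add x y hx hy =>
    rw [star_add, add_sub_add_comm]
    exact add_mem hx hy
  | tmul x y =>
    refine ⟨(y.re • ![2 * x.imI, 2 * x.imJ, 2 * x.imK],
      x.re • ![2 * y.imI, 2 * y.imJ, 2 * y.imK]), ?_⟩
    calc (albertPair a b c d).ι _ = y.re • (x - star x) ⊗ₜ 1 + 1 ⊗ₜ (x.re • (y - star y)) := by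
          simp only [albertPair_ι_apply, map_smul, pureQuaternion_two_mul_im, smul_tmul']
      _ = x ⊗ₜ y - star (x ⊗ₜ y) := by
          have hcoe (u v r : K) : (r : ℍ[K,u,v]) = r • 1 := Algebra.algebraMap_eq_smul_one r
          rw [star_tmul, star_eq_two_re_sub x, star_eq_two_re_sub y]
          simp only [zero_mul, add_zero, hcoe, sub_tmul, tmul_sub, ← smul_tmul', tmul_smul]
          module

lemma exists_albertPair_ι_eq_of_mem_skewAdjoint [NeZero (2 : K)] {x : D} (hx : x ∈ skewAdjoint D) :
    ∃ v, (albertPair a b c d).ι v = x := by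
  obtain ⟨v, hv⟩ := exists_albertPair_ι_eq_sub_star x
  refine ⟨(2⁻¹ : K) • v, ?_⟩
  rw [map_smul, hv, skewAdjoint.mem_iff.1 hx, sub_neg_eq_add, ← two_smul K,
    inv_smul_smul₀ two_ne_zero]

theorem exists_algEquiv_of_mul_self_eq [NeZero (2 : K)] [NoZeroDivisors D] (ha : a ≠ 0)
    (hb : b ≠ 0) (hc : c ≠ 0) (hd : d ≠ 0) {e : K} (he : ¬IsSquare e) {x : D}
    (hx : x * x = algebraMap K D e) :
    ∃ a' b' c' : K, a' ≠ 0 ∧ b' ≠ 0 ∧ c' ≠ 0 ∧ Nonempty (D ≃ₐ[K] ℍ[K,a',b'] ⊗[K] ℍ[K,c',e]) := by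
  let C := albertPair a b c d
  obtain ⟨_, hg, hιg, hgx⟩ := exists_skewAdjoint_mul_mem_skewAdjoint ha hb hc hd he hx
  obtain ⟨g, rfl⟩ := exists_albertPair_ι_eq_of_mem_skewAdjoint hg
  obtain ⟨h, hh⟩ := exists_albertPair_ι_eq_of_mem_skewAdjoint hgx
  have hg0 : g ≠ 0 := by
    rintro rfl
    exact hιg (map_zero _)
  have hQg : albertForm a b c d g ≠ 0 := mt (albertForm_anisotropic g) hg0
  have hfactor : C.conj g * C.ι ((albertForm a b c d g)⁻¹ • h) = x := by
    rw [map_smul, hh, mul_smul_comm, ← mul_assoc, C.conj_mul_self, ← Algebra.smul_def,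
      inv_smul_smul₀ hQg]
  refine C.exists_algEquiv_of_sq_eq (by simp) albertForm_anisotropic
    (by simp [QuaternionAlgebra.finrank_eq_four]) he hg0 (fun hzero ↦ he ?_) (hfactor.symm ▸ hx)
  have hx0 : x = 0 := by rw [← hfactor, hzero, map_zero, mul_zero]
  exact ⟨0, (algebraMap K D).injective (by rw [← hx, hx0, mul_zero, map_mul, map_zero, mul_zero])⟩

end Biquaternion

theorem biquaternion_decomposition_general {K L H : Type*} [Field K] [Field L] [Algebra K L]
    [Ring H] [Algebra L H] [Nontrivial H] [FiniteDimensional L H] [NeZero (2 : K)] {d : K}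
    (hnonsq : ¬IsSquare d) (hquad : finrank K L = 2) (hsqrt : ∃ δ : L, δ ^ 2 = algebraMap K L d)
    {e₁ f₁ e₂ f₂ : K} (he₁ : e₁ ≠ 0) (hf₁ : f₁ ≠ 0) (he₂ : e₂ ≠ 0) (hf₂ : f₂ ≠ 0)
    (hdiv : ∀ z : ℍ[K,e₁,f₁] ⊗[K] ℍ[K,e₂,f₂], z ≠ 0 → IsUnit z) (hH : finrank L H < 16)
    (hbrauer : BrauerEquivalent L (L ⊗[K] (ℍ[K,e₁,f₁] ⊗[K] ℍ[K,e₂,f₂])) H) :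
    ∃ a b c : K, a ≠ 0 ∧ b ≠ 0 ∧ c ≠ 0 ∧
      Nonempty (ℍ[K,e₁,f₁] ⊗[K] ℍ[K,e₂,f₂] ≃ₐ[K] ℍ[K,a,b] ⊗[K] ℍ[K,c,d]) := by
  obtain ⟨δ, hδ⟩ := hsqrt
  have : NoZeroDivisors (ℍ[K,e₁,f₁] ⊗[K] ℍ[K,e₂,f₂]) := noZeroDivisors_of_forall_isUnit hdiv
  obtain ⟨x, hx⟩ := exists_mul_self_eq_of_brauerEquivalent hquad hδ hdiv
    (by simpa [QuaternionAlgebra.finrank_eq_four] using hH) hbrauer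
  exact exists_algEquiv_of_mul_self_eq he₁ hf₁ he₂ hf₂ hnonsq hx

/-- Let `K` be a field of characteristic `≠ 2`, `d ∈ K^×` a non-square and
`L = K(√d)`.  Let `Q₁ = (e₁,f₁)_K` and `Q₂ = (e₂,f₂)_K` be quaternion algebras over `K`
such that the biquaternion algebra `Q₁ ⊗_K Q₂` is a division algebra, and suppose that
`(Q₁ ⊗_K Q₂) ⊗_K L` is Brauer-equivalent to a quaternion algebra over `L`.  Then there are
`a, b, c ∈ K^×` with `Q₁ ⊗_K Q₂` Brauer-equivalent to `(a,b)_K ⊗_K (c,d)_K`. -/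
theorem biquaternion_decomposition
    (K L : Type) [Field K] [Field L] [Algebra K L]
    (hchar : ringChar K ≠ 2)
    (d : K) (hd : d ≠ 0) (hnonsq : ¬∃ x : K, x ^ 2 = d)
    (hquad : Module.finrank K L = 2)
    (hsqrt : ∃ δ : L, δ ^ 2 = algebraMap K L d)
    (e₁ f₁ e₂ f₂ : K) (he₁ : e₁ ≠ 0) (hf₁ : f₁ ≠ 0) (he₂ : e₂ ≠ 0) (hf₂ : f₂ ≠ 0)
    (hdiv : ∀ z : ℍ[K, e₁, f₁] ⊗[K] ℍ[K, e₂, f₂], z ≠ 0 → IsUnit z)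
    (hquat : ∃ x y : L, x ≠ 0 ∧ y ≠ 0 ∧
      BrauerEquivalent L (L ⊗[K] (ℍ[K, e₁, f₁] ⊗[K] ℍ[K, e₂, f₂])) ℍ[L, x, y]) :
    ∃ a b c : K, a ≠ 0 ∧ b ≠ 0 ∧ c ≠ 0 ∧
      BrauerEquivalent K (ℍ[K, e₁, f₁] ⊗[K] ℍ[K, e₂, f₂]) (ℍ[K, a, b] ⊗[K] ℍ[K, c, d]) := by
  have : NeZero (2 : K) := ⟨Ring.two_ne_zero hchar⟩
  obtain ⟨x, y, -, -, hbrauer⟩ := hquat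
  obtain ⟨a, b, c, ha, hb, hc, ⟨φ⟩⟩ := biquaternion_decomposition_general
    (fun ⟨r, hr⟩ ↦ hnonsq ⟨r, by rw [pow_two, hr]⟩) hquad hsqrt he₁ hf₁ he₂ hf₂ hdiv
    (by simp [QuaternionAlgebra.finrank_eq_four]) hbrauer
  exact ⟨a, b, c, ha, hb, hc, .of_algEquiv φ⟩
end

section
/- Let k be a field of characteristic different from 2. Work inside the commutative ring R obtained from the polynomial ring k[r, s, t, u, v, u′, v′] by inverting r, s and t. Let M₁ be the k[r, r⁻¹, s, s⁻¹, t]-submodule of R generated by the nine elements t²u²u′², tu²u′v′, t²u²v′², tuvu′², uvu′v′, tuvv′², t²v²u′², tv²u′v′, t²v²v′². Let M₂ be the k[r, r⁻¹, s, t, t⁻¹]-submodule of R generated by the nine elements s²(u²+v²)(u′²+v′²), s(u²+v²)(u′²−v′²), s²(u²+v²)u′v′, s(u²−v²)(u′²+v′²), (u²−v²)(u′²−v′²), s(u²−v²)u′v′, s²uv(u′²+v′²), suv(u′²−v′²), s²uvu′v′. Let M₃ be the k[r, s, s⁻¹, t, t⁻¹]-submodule of R generated by the nine elements r²u²u′²,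 r²(uv′+vu′)², (uv′−vu′)², r²v²v′², ruu′(uv′−vu′), rvv′(uv′−vu′), r(uv′+vu′)(uv′−vu′), r²uu′(uv′+vu′), r²vv′(uv′+vu′). Then the intersection M₁ ∩ M₂ ∩ M₃ (as subsets of R) equals the k[r, s, t]-submodule of R generated by the nine elements r²s²uvu′v′, r²t²(u²−v²)(u′²−v′²), s²t²(uv′−vu′)², rst(uu′+vv′)(uv′−vu′), r²st(uu′−vv′)(uv′+vu′), rs²t(uu′−vv′)(uv′−vu′), rst²(uv′+vu′)(uv′−vu′), r²s²t(uu′+vv′)(uv′+vu′), r²st²(uu′−vv′)(uu′+vv′); moreover, these nine elements form a basis, so that this module is free of rank 9 over k[r, s, t]. -/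
/-!
**Statement 5.**  Inside the localization `R` of `k[r,s,t,u,v,u',v']` at `r·s·t`, the
intersection of the `k[r,r⁻¹,s,s⁻¹,t]`-module `M₁`, the `k[r,r⁻¹,s,t,t⁻¹]`-module `M₂` and
the `k[r,s,s⁻¹,t,t⁻¹]`-module `M₃` spanned by the indicated nine-element families equals the
`k[r,s,t]`-module spanned by the indicated nine elements, and those nine elements are
linearly independent over `k[r,s,t]` (hence form a basis of the intersection).
-/

noncomputable section Stmt5

open MvPolynomial

/-- The polynomial ring `k[r,s,t,u,v,u',v']`. -/
abbrev Pol (k : Type) [Field k] : Type := MvPolynomial (Fin 7) k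

/-- The localization of `k[r,s,t,u,v,u',v']` inverting `r`, `s` and `t`. -/
abbrev Loc (k : Type) [Field k] : Type := Localization.Away (X 0 * X 1 * X 2 : Pol k)

variable (k : Type) [Field k]

/-- the image of `r` -/ def rr : Loc k := algebraMap (Pol k) (Loc k) (X 0)
/-- the image of `s` -/ def ss : Loc k := algebraMap (Pol k) (Loc k) (X 1)
/-- the image of `t` -/ def tt : Loc k := algebraMap (Pol k) (Loc k) (X 2)
/-- the image of `u` -/ def uu : Loc k := algebraMap (Pol k) (Loc k) (X 3)
/-- the image of `v` -/ def vv : Loc k := algebraMap (Pol k) (Loc k) (X 4)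
/-- the image of `u'` -/ def uu' : Loc k := algebraMap (Pol k) (Loc k) (X 5)
/-- the image of `v'` -/ def vv' : Loc k := algebraMap (Pol k) (Loc k) (X 6)

/-- `r⁻¹` in the localization -/
def rrInv : Loc k :=
  algebraMap (Pol k) (Loc k) (X 1 * X 2) *
    IsLocalization.Away.invSelf (S := Loc k) (X 0 * X 1 * X 2 : Pol k)

/-- `s⁻¹` in the localization -/
def ssInv : Loc k :=
  algebraMap (Pol k) (Loc k) (X 0 * X 2) *
    IsLocalization.Away.invSelf (S := Loc k) (X 0 * X 1 * X 2 : Pol k)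

/-- `t⁻¹` in the localization -/
def ttInv : Loc k :=
  algebraMap (Pol k) (Loc k) (X 0 * X 1) *
    IsLocalization.Away.invSelf (S := Loc k) (X 0 * X 1 * X 2 : Pol k)

/-- the coefficient ring `k[r,r⁻¹,s,s⁻¹,t]` -/
def A₁ : Subalgebra k (Loc k) := Algebra.adjoin k {rr k, rrInv k, ss k, ssInv k, tt k}
/-- the coefficient ring `k[r,r⁻¹,s,t,t⁻¹]` -/
def A₂ : Subalgebra k (Loc k) := Algebra.adjoin k {rr k, rrInv k, ss k, tt k, ttInv k}
/-- the coefficient ring `k[r,s,s⁻¹,t,t⁻¹]` -/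
def A₃ : Subalgebra k (Loc k) := Algebra.adjoin k {rr k, ss k, ssInv k, tt k, ttInv k}
/-- the coefficient ring `k[r,s,t]` -/
def A₀ : Subalgebra k (Loc k) := Algebra.adjoin k {rr k, ss k, tt k}

/-- the nine generators of `M₁` -/
def g₁ : Fin 9 → Loc k :=
  ![tt k ^ 2 * uu k ^ 2 * uu' k ^ 2,
    tt k * uu k ^ 2 * uu' k * vv' k,
    tt k ^ 2 * uu k ^ 2 * vv' k ^ 2,
    tt k * uu k * vv k * uu' k ^ 2,
    uu k * vv k * uu' k * vv' k,
    tt k * uu k * vv k * vv' k ^ 2,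
    tt k ^ 2 * vv k ^ 2 * uu' k ^ 2,
    tt k * vv k ^ 2 * uu' k * vv' k,
    tt k ^ 2 * vv k ^ 2 * vv' k ^ 2]

/-- the nine generators of `M₂` -/
def g₂ : Fin 9 → Loc k :=
  ![ss k ^ 2 * (uu k ^ 2 + vv k ^ 2) * (uu' k ^ 2 + vv' k ^ 2),
    ss k * (uu k ^ 2 + vv k ^ 2) * (uu' k ^ 2 - vv' k ^ 2),
    ss k ^ 2 * (uu k ^ 2 + vv k ^ 2) * (uu' k * vv' k),
    ss k * (uu k ^ 2 - vv k ^ 2) * (uu' k ^ 2 + vv' k ^ 2),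
    (uu k ^ 2 - vv k ^ 2) * (uu' k ^ 2 - vv' k ^ 2),
    ss k * (uu k ^ 2 - vv k ^ 2) * (uu' k * vv' k),
    ss k ^ 2 * (uu k * vv k) * (uu' k ^ 2 + vv' k ^ 2),
    ss k * (uu k * vv k) * (uu' k ^ 2 - vv' k ^ 2),
    ss k ^ 2 * (uu k * vv k) * (uu' k * vv' k)]

/-- the nine generators of `M₃` -/
def g₃ : Fin 9 → Loc k :=
  ![rr k ^ 2 * uu k ^ 2 * uu' k ^ 2,
    rr k ^ 2 * (uu k * vv' k + vv k * uu' k) ^ 2,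
    (uu k * vv' k - vv k * uu' k) ^ 2,
    rr k ^ 2 * vv k ^ 2 * vv' k ^ 2,
    rr k * uu k * uu' k * (uu k * vv' k - vv k * uu' k),
    rr k * vv k * vv' k * (uu k * vv' k - vv k * uu' k),
    rr k * (uu k * vv' k + vv k * uu' k) * (uu k * vv' k - vv k * uu' k),
    rr k ^ 2 * uu k * uu' k * (uu k * vv' k + vv k * uu' k),
    rr k ^ 2 * vv k * vv' k * (uu k * vv' k + vv k * uu' k)]

/-- the nine elements generating (and forming a basis of) the intersection -/
def g₀ : Fin 9 → Loc k :=
  ![rr k ^ 2 * ss k ^ 2 * (uu k * vv k * uu' k * vv' k),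
    rr k ^ 2 * tt k ^ 2 * ((uu k ^ 2 - vv k ^ 2) * (uu' k ^ 2 - vv' k ^ 2)),
    ss k ^ 2 * tt k ^ 2 * (uu k * vv' k - vv k * uu' k) ^ 2,
    rr k * ss k * tt k *
      ((uu k * uu' k + vv k * vv' k) * (uu k * vv' k - vv k * uu' k)),
    rr k ^ 2 * ss k * tt k *
      ((uu k * uu' k - vv k * vv' k) * (uu k * vv' k + vv k * uu' k)),
    rr k * ss k ^ 2 * tt k *
      ((uu k * uu' k - vv k * vv' k) * (uu k * vv' k - vv k * uu' k)),
    rr k * ss k * tt k ^ 2 *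
      ((uu k * vv' k + vv k * uu' k) * (uu k * vv' k - vv k * uu' k)),
    rr k ^ 2 * ss k ^ 2 * tt k *
      ((uu k * uu' k + vv k * vv' k) * (uu k * vv' k + vv k * uu' k)),
    rr k ^ 2 * ss k * tt k ^ 2 *
      ((uu k * uu' k - vv k * vv' k) * (uu k * uu' k + vv k * vv' k))]

/-- `M₁`, a module over `k[r,r⁻¹,s,s⁻¹,t]` -/
def M₁ : Submodule (A₁ k) (Loc k) := Submodule.span (A₁ k) (Set.range (g₁ k))
/-- `M₂`, a module over `k[r,r⁻¹,s,t,t⁻¹]` -/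
def M₂ : Submodule (A₂ k) (Loc k) := Submodule.span (A₂ k) (Set.range (g₂ k))
/-- `M₃`, a module over `k[r,s,s⁻¹,t,t⁻¹]` -/
def M₃ : Submodule (A₃ k) (Loc k) := Submodule.span (A₃ k) (Set.range (g₃ k))
/-- `M₀`, a module over `k[r,s,t]` -/
def M₀ : Submodule (A₀ k) (Loc k) := Submodule.span (A₀ k) (Set.range (g₀ k))

/-!
`M₀` is free over the factorial ring `k[r, s, t]`, in which `r`, `s`, `t` are pairwise coprime.
Only `r` and `s` are inverted in `M₁`, so an element `x` of `M₁` satisfies `(rs)ˡ x ∈ M₀`; likewise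
`(rt)ᵐ x ∈ M₀` on `M₂` and `(st)ⁿ x ∈ M₀` on `M₃`. For `x` in the intersection, comparing
coordinates in the basis `g₀` cancels these coprime denominators, whence `x ∈ M₀`. The independence
of `g₀` is a rank count: its span contains nonzero multiples of the nine monomials that are
quadratic in `u, v` and quadratic in `u', v'`.
-/

section Span

variable {A M ι : Type*} [CommRing A] [AddCommGroup M] [Module A M]

theorem mem_span_range_of_isRelPrime_smul_mem [DecompositionMonoid A] [Finite ι] {g : ι → M}
    (hg : LinearIndependent A g) {a b : A} (hab : IsRelPrime a b) (ha : IsSMulRegular M a) {x : M}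
    (hax : a • x ∈ Submodule.span A (Set.range g)) (hbx : b • x ∈ Submodule.span A (Set.range g)) :
    x ∈ Submodule.span A (Set.range g) := by
  cases nonempty_fintype ι
  obtain ⟨p, hp⟩ := (Submodule.mem_span_range_iff_exists_fun A).1 hax
  obtain ⟨q, hq⟩ := (Submodule.mem_span_range_iff_exists_fun A).1 hbx
  have cross (i : ι) : b * p i = a * q i := by
    refine Fintype.linearIndependent_iffₛ.1 hg (fun i ↦ b * p i) (fun i ↦ a * q i) ?_ i
    simp only [mul_smul, ← Finset.smul_sum, hp, hq, smul_comm a b x]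
  have dvd (i : ι) : a ∣ p i := hab.dvd_of_dvd_mul_left ⟨q i, cross i⟩
  choose c hc using dvd
  refine (Submodule.mem_span_range_iff_exists_fun A).2 ⟨c, ha ?_⟩
  simp only [← hp, hc, mul_smul, Finset.smul_sum]

theorem mem_span_range_of_pow_mul_smul_mem [DecompositionMonoid A] [Finite ι] {g : ι → M}
    (hg : LinearIndependent A g) {r s t : A} (hrs : IsRelPrime r s) (hrt : IsRelPrime r t)
    (hst : IsRelPrime s t) (hr : IsSMulRegular M r) (hs : IsSMulRegular M s) {x : M} {l m n : ℕ}
    (hl : (r * s) ^ l • x ∈ Submodule.span A (Set.range g))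
    (hm : (r * t) ^ m • x ∈ Submodule.span A (Set.range g))
    (hn : (s * t) ^ n • x ∈ Submodule.span A (Set.range g)) :
    x ∈ Submodule.span A (Set.range g) := by
  have hrx : r ^ (l + m) • x ∈ Submodule.span A (Set.range g) := by
    refine mem_span_range_of_isRelPrime_smul_mem hg (hst.pow (m := l) (n := m)) (hs.pow l) ?_ ?_
    · convert Submodule.smul_mem _ (r ^ m) hl using 1
      simp only [smul_smul]
      ring_nf
    · convert Submodule.smul_mem _ (r ^ l) hm using 1
      simp only [smul_smul]
      ring_nf
  exact mem_span_range_of_isRelPrime_smul_mem hg (hrs.mul_right hrt).pow (hr.pow _) hrx hn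

theorem mem_span_range_of_smul_eq_sum [Fintype ι] {d : A} (hd : IsUnit d) {x : M} {g : ι → M}
    {c : ι → A} (hx : d • x = ∑ i, c i • g i) : x ∈ Submodule.span A (Set.range g) :=
  (Submodule.smul_mem_iff_of_isUnit _ hd).1
    ((Submodule.mem_span_range_iff_exists_fun A).2 ⟨c, hx.symm⟩)

theorem linearIndependent_of_smul_mem_span [IsDomain A] [Finite ι] {h g : ι → M}
    (hh : LinearIndependent A h) {w : ι → A} (hw : ∀ i, w i ≠ 0)
    (hmem : ∀ i, w i • h i ∈ Submodule.span A (Set.range g)) : LinearIndependent A g := by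
  cases nonempty_fintype ι
  have hwh : LinearIndependent A fun i ↦ w i • h i := by
    refine Fintype.linearIndependent_iff.2 fun c hc i ↦ ?_
    simp only [smul_smul] at hc
    exact (mul_eq_zero.1 (Fintype.linearIndependent_iff.1 hh _ hc i)).resolve_right (hw i)
  have : Module.Finite A (Submodule.span A (Set.range g)) :=
    Module.Finite.span_of_finite A (Set.finite_range g)
  refine linearIndependent_iff_card_le_finrank_span.2 ?_
  refine (finrank_span_eq_card hwh).symm.trans_le (Submodule.finrank_mono (Submodule.span_le.2 ?_))
  exact Set.range_subset_iff.2 hmem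

end Span

section Subalgebra

variable {R B : Type*} [CommRing R] [CommRing B] [Algebra R B]

theorem span_subset_span_of_le {S T : Subalgebra R B} (hST : S ≤ T) {s t : Set B}
    (hs : s ⊆ Submodule.span S t) : (Submodule.span S s : Set B) ⊆ Submodule.span T t := by
  intro x hx
  replace hx : x ∈ Submodule.span S t := Submodule.span_le.2 hs hx
  induction hx using Submodule.span_induction with
  | mem x hx => exact Submodule.subset_span hx
  | zero => exact zero_mem _
  | add x y _ _ hx hy => exact add_mem hx hy
  | smul a x _ hx => exact Submodule.smul_mem _ (⟨a, hST a.2⟩ : T) hx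

theorem exists_pow_smul_mem_of_mem_span_adjoin {S : Subalgebra R B} {Y : Set B} (q : S)
    (hq : ∀ y ∈ Y, q * y ∈ S) {N : Submodule S B} {s : Set B} (hN : ∀ y ∈ s, ∃ n : ℕ, q ^ n • y ∈ N)
    {x : B} (hx : x ∈ Submodule.span (Algebra.adjoin R Y) s) : ∃ n : ℕ, q ^ n • x ∈ N := by
  have hsmul {a : B} (ha : a ∈ Algebra.adjoin R Y) : ∃ n : ℕ, (q : B) ^ n * a ∈ S := by
    obtain ⟨n, hn⟩ := Algebra.pow_smul_mem_of_smul_subset_of_mem_adjoin (q : B) Y S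
      (by rintro _ ⟨y, hy, rfl⟩; exact hq y hy) ha q.2
    exact ⟨n, hn n le_rfl⟩
  induction hx using Submodule.span_induction with
  | mem x hx => exact hN x hx
  | zero => exact ⟨0, by simp⟩
  | add x y _ _ hx hy =>
    obtain ⟨m, hm⟩ := hx
    obtain ⟨n, hn⟩ := hy
    refine ⟨m + n, ?_⟩
    rw [smul_add, pow_add]
    refine add_mem ?_ ?_
    · rw [mul_comm, mul_smul]
      exact N.smul_mem _ hm
    · rw [mul_smul]
      exact N.smul_mem _ hn
  | smul a x _ hx =>
    obtain ⟨m, hm⟩ := hsmul a.2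
    obtain ⟨n, hn⟩ := hx
    refine ⟨m + n, ?_⟩
    convert N.smul_mem ⟨_, hm⟩ hn using 1
    simp only [Subalgebra.smul_def, smul_eq_mul, SubmonoidClass.coe_pow]
    ring

end Subalgebra

theorem linearIndependent_prod_pow {A B ι σ : Type*} [CommRing A] [CommRing B] [Algebra A B]
    [Fintype σ] {y : σ → B} (hy : AlgebraicIndependent A y) {α : ι → σ → ℕ}
    (hα : Function.Injective α) : LinearIndependent A fun j ↦ ∏ i, y i ^ α j i := by
  have hmon : LinearIndependent A fun j ↦
      monomial (Finsupp.equivFunOnFinite.symm (α j)) (1 : A) :=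
    (basisMonomials σ A).linearIndependent.comp _ (Finsupp.equivFunOnFinite.symm.injective.comp hα)
  have himage := hmon.map' (aeval y).toLinearMap (LinearMap.ker_eq_bot.2 hy)
  simpa [Function.comp_def, aeval_monomial, Finsupp.prod_fintype] using himage

theorem isRelPrime_X_X {A σ : Type*} [CommRing A] [IsDomain A] {i j : σ} (hij : i ≠ j) :
    IsRelPrime (X i : MvPolynomial σ A) (X j) :=
  X_prime.irreducible.isRelPrime_iff_not_dvd.2 (by simpa [X_dvd_X] using hij)

theorem isUnit_two {F B : Type*} [Field F] [CommRing B] [Algebra F B] (hchar : ringChar F ≠ 2) :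
    IsUnit (2 : B) := by
  simpa only [map_ofNat] using (Ring.two_ne_zero hchar).isUnit.map (algebraMap F B)

theorem isUnit_four {F B : Type*} [Field F] [CommRing B] [Algebra F B] (hchar : ringChar F ≠ 2) :
    IsUnit (4 : B) := by
  have htwo : IsUnit (2 : B) := isUnit_two hchar
  convert htwo.mul htwo
  norm_num

theorem sum_univ_nine {M : Type*} [AddCommMonoid M] (f : Fin 9 → M) :
    ∑ i, f i = f 0 + f 1 + f 2 + f 3 + f 4 + f 5 + f 6 + f 7 + f 8 := by
  rw [Fin.sum_univ_castSucc, Fin.sum_univ_eight]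
  rfl

theorem powers_rst_le_nonZeroDivisors :
    Submonoid.powers (X 0 * X 1 * X 2 : Pol k) ≤ nonZeroDivisors (Pol k) :=
  powers_le_nonZeroDivisors_of_noZeroDivisors
    (mul_ne_zero (mul_ne_zero (X_ne_zero 0) (X_ne_zero 1)) (X_ne_zero 2))

instance : IsDomain (Loc k) :=
  IsLocalization.isDomain_localization (powers_rst_le_nonZeroDivisors k)

theorem algebraicIndependent_algebraMap_X :
    AlgebraicIndependent k fun i : Fin 7 ↦ algebraMap (Pol k) (Loc k) (X i) :=
  (algebraicIndependent_X (Fin 7) k).map' (f := IsScalarTower.toAlgHom k (Pol k) (Loc k))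
    (IsLocalization.injective (Loc k) (powers_rst_le_nonZeroDivisors k))

theorem A₀_eq_adjoin_range : A₀ k = Algebra.adjoin k (Set.range ![rr k, ss k, tt k]) := by
  simp only [A₀, Matrix.range_cons, Matrix.range_empty, Set.union_empty, Set.singleton_union]

theorem algebraicIndependent_sumElim :
    AlgebraicIndependent k (Sum.elim ![uu k, vv k, uu' k, vv' k] ![rr k, ss k, tt k]) := by
  convert (algebraicIndependent_algebraMap_X k).comp
    (Sum.elim (Fin.natAdd 3) (Fin.castAdd 4) : Fin 4 ⊕ Fin 3 → Fin 7) (by decide) using 1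
  ext (i | i) <;> fin_cases i <;> rfl

theorem algebraicIndependent_rr_ss_tt : AlgebraicIndependent k ![rr k, ss k, tt k] :=
  (AlgebraicIndependent.sumElim_iff.1 (algebraicIndependent_sumElim k)).1

theorem algebraicIndependent_uu_vv : AlgebraicIndependent (A₀ k) ![uu k, vv k, uu' k, vv' k] := by
  rw [A₀_eq_adjoin_range]
  exact (AlgebraicIndependent.sumElim_iff.1 (algebraicIndependent_sumElim k)).2

/-- The variable `r` as an element of the coefficient ring `k[r, s, t]`. -/
def r₀ : A₀ k := ⟨rr k, Algebra.subset_adjoin (by simp)⟩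
/-- The variable `s` as an element of the coefficient ring `k[r, s, t]`. -/
def s₀ : A₀ k := ⟨ss k, Algebra.subset_adjoin (by simp)⟩
/-- The variable `t` as an element of the coefficient ring `k[r, s, t]`. -/
def t₀ : A₀ k := ⟨tt k, Algebra.subset_adjoin (by simp)⟩

/-- The identification of `k[r, s, t]` with a polynomial ring in three variables. -/
def coeffRingEquiv : MvPolynomial (Fin 3) k ≃ₐ[k] A₀ k :=
  (algebraicIndependent_rr_ss_tt k).aevalEquiv.trans
    (Subalgebra.equivOfEq _ _ (A₀_eq_adjoin_range k).symm)

theorem coeffRingEquiv_X (i : Fin 3) : coeffRingEquiv k (X i) = ![r₀ k, s₀ k, t₀ k] i := by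
  refine Subtype.ext ?_
  fin_cases i <;> exact aeval_X ![rr k, ss k, tt k] _

instance : DecompositionMonoid (A₀ k) :=
  MulEquiv.decompositionMonoid (coeffRingEquiv k).symm

theorem pairwise_isRelPrime :
    Pairwise fun i j ↦ IsRelPrime (![r₀ k, s₀ k, t₀ k] i) (![r₀ k, s₀ k, t₀ k] j) := by
  intro i j hij
  rw [← coeffRingEquiv_X, ← coeffRingEquiv_X]
  refine IsRelPrime.of_map (coeffRingEquiv k).symm ?_
  simpa only [AlgEquiv.symm_apply_apply] using isRelPrime_X_X hij

theorem r₀_s₀_t₀_ne_zero (i : Fin 3) : ![r₀ k, s₀ k, t₀ k] i ≠ 0 := by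
  rw [← coeffRingEquiv_X]
  exact (map_ne_zero_iff _ (coeffRingEquiv k).injective).2 (X_ne_zero i)

theorem algebraMap_r₀ : algebraMap (A₀ k) (Loc k) (r₀ k) = rr k := rfl

theorem algebraMap_s₀ : algebraMap (A₀ k) (Loc k) (s₀ k) = ss k := rfl

theorem algebraMap_t₀ : algebraMap (A₀ k) (Loc k) (t₀ k) = tt k := rfl

theorem algebraMap_X_mul_invSelf :
    algebraMap (Pol k) (Loc k) (X 0) * algebraMap (Pol k) (Loc k) (X 1) *
      algebraMap (Pol k) (Loc k) (X 2) *
        IsLocalization.Away.invSelf (S := Loc k) (X 0 * X 1 * X 2 : Pol k) = 1 := by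
  rw [← map_mul, ← map_mul]
  exact IsLocalization.Away.mul_invSelf _

theorem rr_mul_rrInv : rr k * rrInv k = 1 := by
  rw [rr, rrInv, map_mul]
  linear_combination algebraMap_X_mul_invSelf k

theorem ss_mul_ssInv : ss k * ssInv k = 1 := by
  rw [ss, ssInv, map_mul]
  linear_combination algebraMap_X_mul_invSelf k

theorem tt_mul_ttInv : tt k * ttInv k = 1 := by
  rw [tt, ttInv, map_mul]
  linear_combination algebraMap_X_mul_invSelf k

section Matrices

variable {A : Type*} [CommRing A] (r s t : A)

/-- Row `j` lists the coefficients of `4 (rs)² g₁ j` in terms of `g₀`. -/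
def g₁ToG₀ : Matrix (Fin 9) (Fin 9) A :=
  !![4 * t ^ 2, 2 * s ^ 2, 2 * r ^ 2, 0, 0, 0, 0, 0, 2 * s;
     0, 0, 0, r * s, s, r, 0, 1, 0;
     4 * t ^ 2, 0, 2 * r ^ 2, 0, 0, 0, 2 * r * s, 0, 0;
     0, 0, 0, -(r * s), s, -r, 0, 1, 0;
     4, 0, 0, 0, 0, 0, 0, 0, 0;
     0, 0, 0, r * s, -s, -r, 0, 1, 0;
     4 * t ^ 2, 0, 2 * r ^ 2, 0, 0, 0, -(2 * r * s), 0, 0;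
     0, 0, 0, -(r * s), -s, r, 0, 1, 0;
     4 * t ^ 2, 2 * s ^ 2, 2 * r ^ 2, 0, 0, 0, 0, 0, -(2 * s)]

/-- Row `j` lists the coefficients of `g₀ j` in terms of `g₁`. -/
def g₀ToG₁ : Matrix (Fin 9) (Fin 9) A :=
  !![0, 0, 0, 0, r ^ 2 * s ^ 2, 0, 0, 0, 0;
     r ^ 2, 0, -r ^ 2, 0, 0, 0, -r ^ 2, 0, r ^ 2;
     0, 0, s ^ 2, 0, -(2 * s ^ 2 * t ^ 2), 0, s ^ 2, 0, 0;
     0, r * s, 0, -(r * s), 0, r * s, 0, -(r * s), 0;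
     0, r ^ 2 * s, 0, r ^ 2 * s, 0, -(r ^ 2 * s), 0, -(r ^ 2 * s), 0;
     0, r * s ^ 2, 0, -(r * s ^ 2), 0, -(r * s ^ 2), 0, r * s ^ 2, 0;
     0, 0, r * s, 0, 0, 0, -(r * s), 0, 0;
     0, r ^ 2 * s ^ 2, 0, r ^ 2 * s ^ 2, 0, r ^ 2 * s ^ 2, 0, r ^ 2 * s ^ 2, 0;
     r ^ 2 * s, 0, 0, 0, 0, 0, 0, 0, -(r ^ 2 * s)]

/-- Row `j` lists the coefficients of `2 (rt)² g₂ j` in terms of `g₀`. -/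
def g₂ToG₀ : Matrix (Fin 9) (Fin 9) A :=
  !![8 * t ^ 2, 2 * s ^ 2, 4 * r ^ 2, 0, 0, 0, 0, 0, 0;
     0, 0, 0, 0, 0, 0, -(2 * r), 0, 2;
     0, 0, 0, 0, 0, r * t, 0, t, 0;
     0, 0, 0, 0, 0, 0, 2 * r, 0, 2;
     0, 2, 0, 0, 0, 0, 0, 0, 0;
     0, 0, 0, r * t, t, 0, 0, 0, 0;
     0, 0, 0, 0, 0, -(r * t), 0, t, 0;
     0, 0, 0, -(r * t), t, 0, 0, 0, 0;
     2 * t ^ 2, 0, 0, 0, 0, 0, 0, 0, 0]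

/-- Row `j` lists the coefficients of `2 g₀ j` in terms of `g₂`. -/
def g₀ToG₂ : Matrix (Fin 9) (Fin 9) A :=
  !![0, 0, 0, 0, 0, 0, 0, 0, 2 * r ^ 2;
     0, 0, 0, 0, 2 * r ^ 2 * t ^ 2, 0, 0, 0, 0;
     t ^ 2, 0, 0, 0, -(s ^ 2 * t ^ 2), 0, 0, 0, -(4 * t ^ 2);
     0, 0, 0, 0, 0, 2 * r * t, 0, -(2 * r * t), 0;
     0, 0, 0, 0, 0, 2 * r ^ 2 * t, 0, 2 * r ^ 2 * t, 0;
     0, 0, 2 * r * t, 0, 0, 0, -(2 * r * t), 0, 0;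
     0, -(r * t ^ 2), 0, r * t ^ 2, 0, 0, 0, 0, 0;
     0, 0, 2 * r ^ 2 * t, 0, 0, 0, 2 * r ^ 2 * t, 0, 0;
     0, r ^ 2 * t ^ 2, 0, r ^ 2 * t ^ 2, 0, 0, 0, 0, 0]

/-- Row `j` lists the coefficients of `2 (st)² g₃ j` in terms of `g₀`. -/
def g₃ToG₀ : Matrix (Fin 9) (Fin 9) A :=
  !![2 * t ^ 2, s ^ 2, r ^ 2, 0, 0, 0, 0, 0, s;
     8 * t ^ 2, 0, 2 * r ^ 2, 0, 0, 0, 0, 0, 0;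
     0, 0, 2, 0, 0, 0, 0, 0, 0;
     2 * t ^ 2, s ^ 2, r ^ 2, 0, 0, 0, 0, 0, -s;
     0, 0, 0, s * t, 0, t, 0, 0, 0;
     0, 0, 0, s * t, 0, -t, 0, 0, 0;
     0, 0, 0, 0, 0, 0, 2 * s, 0, 0;
     0, 0, 0, 0, s * t, 0, 0, t, 0;
     0, 0, 0, 0, -(s * t), 0, 0, t, 0]

/-- Row `j` lists the coefficients of `4 g₀ j` in terms of `g₃`. -/
def g₀ToG₃ : Matrix (Fin 9) (Fin 9) A :=
  !![0, s ^ 2, -(r ^ 2 * s ^ 2), 0, 0, 0, 0, 0, 0;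
     4 * t ^ 2, -(2 * t ^ 2), -(2 * r ^ 2 * t ^ 2), 4 * t ^ 2, 0, 0, 0, 0, 0;
     0, 0, 4 * s ^ 2 * t ^ 2, 0, 0, 0, 0, 0, 0;
     0, 0, 0, 0, 4 * s * t, 4 * s * t, 0, 0, 0;
     0, 0, 0, 0, 0, 0, 0, 4 * s * t, -(4 * s * t);
     0, 0, 0, 0, 4 * s ^ 2 * t, -(4 * s ^ 2 * t), 0, 0, 0;
     0, 0, 0, 0, 0, 0, 4 * s * t ^ 2, 0, 0;
     0, 0, 0, 0, 0, 0, 0, 4 * s ^ 2 * t, 4 * s ^ 2 * t;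
     4 * s * t ^ 2, 0, 0, -(4 * s * t ^ 2), 0, 0, 0, 0, 0]

end Matrices

theorem four_smul_g₁_eq_sum (j : Fin 9) :
    (4 : A₀ k) • (r₀ k * s₀ k) ^ 2 • g₁ k j = ∑ i, g₁ToG₀ (r₀ k) (s₀ k) (t₀ k) j i • g₀ k i := by
  fin_cases j <;>
    simp only [g₁ToG₀, g₀, g₁, sum_univ_nine, Matrix.of_apply, Matrix.cons_val', Matrix.cons_val,
      Matrix.cons_val_fin_one, Fin.reduceFinMk, Fin.zero_eta, Fin.mk_one, Algebra.smul_def,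
      algebraMap_r₀, algebraMap_s₀, algebraMap_t₀, map_zero, map_one, map_neg, map_mul, map_pow,
      map_ofNat] <;>
    ring

theorem two_smul_g₂_eq_sum (j : Fin 9) :
    (2 : A₀ k) • (r₀ k * t₀ k) ^ 2 • g₂ k j = ∑ i, g₂ToG₀ (r₀ k) (s₀ k) (t₀ k) j i • g₀ k i := by
  fin_cases j <;>
    simp only [g₂ToG₀, g₀, g₂, sum_univ_nine, Matrix.of_apply, Matrix.cons_val', Matrix.cons_val,
      Matrix.cons_val_fin_one, Fin.reduceFinMk, Fin.zero_eta, Fin.mk_one, Algebra.smul_def,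
      algebraMap_r₀, algebraMap_s₀, algebraMap_t₀, map_zero, map_neg, map_mul, map_pow,
      map_ofNat] <;>
    ring

theorem two_smul_g₃_eq_sum (j : Fin 9) :
    (2 : A₀ k) • (s₀ k * t₀ k) ^ 2 • g₃ k j = ∑ i, g₃ToG₀ (r₀ k) (s₀ k) (t₀ k) j i • g₀ k i := by
  fin_cases j <;>
    simp only [g₃ToG₀, g₀, g₃, sum_univ_nine, Matrix.of_apply, Matrix.cons_val', Matrix.cons_val,
      Matrix.cons_val_fin_one, Fin.reduceFinMk, Fin.zero_eta, Fin.mk_one, Algebra.smul_def,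
      algebraMap_r₀, algebraMap_s₀, algebraMap_t₀, map_zero, map_neg, map_mul, map_pow,
      map_ofNat] <;>
    ring

theorem g₀_eq_sum (j : Fin 9) :
    g₀ k j = ∑ i, g₀ToG₁ (r₀ k) (s₀ k) (t₀ k) j i • g₁ k i := by
  fin_cases j <;>
    simp only [g₀ToG₁, g₁, g₀, sum_univ_nine, Matrix.of_apply, Matrix.cons_val', Matrix.cons_val,
      Matrix.cons_val_fin_one, Fin.reduceFinMk, Fin.zero_eta, Fin.mk_one, Algebra.smul_def,
      algebraMap_r₀, algebraMap_s₀, algebraMap_t₀, map_zero, map_neg, map_mul, map_pow,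
      map_ofNat] <;>
    ring

theorem two_smul_g₀_eq_sum (j : Fin 9) :
    (2 : A₀ k) • g₀ k j = ∑ i, g₀ToG₂ (r₀ k) (s₀ k) (t₀ k) j i • g₂ k i := by
  fin_cases j <;>
    simp only [g₀ToG₂, g₂, g₀, sum_univ_nine, Matrix.of_apply, Matrix.cons_val', Matrix.cons_val,
      Matrix.cons_val_fin_one, Fin.reduceFinMk, Fin.zero_eta, Fin.mk_one, Algebra.smul_def,
      algebraMap_r₀, algebraMap_s₀, algebraMap_t₀, map_zero, map_neg, map_mul, map_pow,
      map_ofNat] <;>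
    ring

theorem four_smul_g₀_eq_sum (j : Fin 9) :
    (4 : A₀ k) • g₀ k j = ∑ i, g₀ToG₃ (r₀ k) (s₀ k) (t₀ k) j i • g₃ k i := by
  fin_cases j <;>
    simp only [g₀ToG₃, g₃, g₀, sum_univ_nine, Matrix.of_apply, Matrix.cons_val', Matrix.cons_val,
      Matrix.cons_val_fin_one, Fin.reduceFinMk, Fin.zero_eta, Fin.mk_one, Algebra.smul_def,
      algebraMap_r₀, algebraMap_s₀, algebraMap_t₀, map_zero, map_neg, map_mul, map_pow,
      map_ofNat] <;>
    ring

theorem sq_smul_g₁_mem_M₀ (hchar : ringChar k ≠ 2) (j : Fin 9) :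
    (r₀ k * s₀ k) ^ 2 • g₁ k j ∈ M₀ k :=
  mem_span_range_of_smul_eq_sum (isUnit_four hchar) (four_smul_g₁_eq_sum k j)

theorem sq_smul_g₂_mem_M₀ (hchar : ringChar k ≠ 2) (j : Fin 9) :
    (r₀ k * t₀ k) ^ 2 • g₂ k j ∈ M₀ k :=
  mem_span_range_of_smul_eq_sum (isUnit_two hchar) (two_smul_g₂_eq_sum k j)

theorem sq_smul_g₃_mem_M₀ (hchar : ringChar k ≠ 2) (j : Fin 9) :
    (s₀ k * t₀ k) ^ 2 • g₃ k j ∈ M₀ k :=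
  mem_span_range_of_smul_eq_sum (isUnit_two hchar) (two_smul_g₃_eq_sum k j)

theorem M₀_subset_M₁ : (M₀ k : Set (Loc k)) ⊆ M₁ k :=
  span_subset_span_of_le (Algebra.adjoin_mono (by grind)) <| Set.range_subset_iff.2 fun j ↦
    (Submodule.mem_span_range_iff_exists_fun _).2 ⟨_, (g₀_eq_sum k j).symm⟩

theorem M₀_subset_M₂ (hchar : ringChar k ≠ 2) : (M₀ k : Set (Loc k)) ⊆ M₂ k :=
  span_subset_span_of_le (Algebra.adjoin_mono (by grind)) <| Set.range_subset_iff.2 fun j ↦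
    mem_span_range_of_smul_eq_sum (isUnit_two hchar) (two_smul_g₀_eq_sum k j)

theorem M₀_subset_M₃ (hchar : ringChar k ≠ 2) : (M₀ k : Set (Loc k)) ⊆ M₃ k :=
  span_subset_span_of_le (Algebra.adjoin_mono (by grind)) <| Set.range_subset_iff.2 fun j ↦
    mem_span_range_of_smul_eq_sum (isUnit_four hchar) (four_smul_g₀_eq_sum k j)

theorem exists_pow_smul_mem_M₀_of_mem_M₁ (hchar : ringChar k ≠ 2) {x : Loc k} (hx : x ∈ M₁ k) :
    ∃ n : ℕ, (r₀ k * s₀ k) ^ n • x ∈ M₀ k := by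
  refine exists_pow_smul_mem_of_mem_span_adjoin (r₀ k * s₀ k) ?_
    (Set.forall_mem_range.2 fun j ↦ ⟨2, sq_smul_g₁_mem_M₀ k hchar j⟩) hx
  rintro _ (rfl | rfl | rfl | rfl | rfl)
  · exact mul_mem (r₀ k * s₀ k).2 (r₀ k).2
  · have cancel : rr k * ss k * rrInv k = ss k := by linear_combination ss k * rr_mul_rrInv k
    exact Set.mem_of_eq_of_mem cancel (s₀ k).2
  · exact mul_mem (r₀ k * s₀ k).2 (s₀ k).2
  · have cancel : rr k * ss k * ssInv k = rr k := by linear_combination rr k * ss_mul_ssInv k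
    exact Set.mem_of_eq_of_mem cancel (r₀ k).2
  · exact mul_mem (r₀ k * s₀ k).2 (t₀ k).2

theorem exists_pow_smul_mem_M₀_of_mem_M₂ (hchar : ringChar k ≠ 2) {x : Loc k} (hx : x ∈ M₂ k) :
    ∃ n : ℕ, (r₀ k * t₀ k) ^ n • x ∈ M₀ k := by
  refine exists_pow_smul_mem_of_mem_span_adjoin (r₀ k * t₀ k) ?_
    (Set.forall_mem_range.2 fun j ↦ ⟨2, sq_smul_g₂_mem_M₀ k hchar j⟩) hx
  rintro _ (rfl | rfl | rfl | rfl | rfl)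
  · exact mul_mem (r₀ k * t₀ k).2 (r₀ k).2
  · have cancel : rr k * tt k * rrInv k = tt k := by linear_combination tt k * rr_mul_rrInv k
    exact Set.mem_of_eq_of_mem cancel (t₀ k).2
  · exact mul_mem (r₀ k * t₀ k).2 (s₀ k).2
  · exact mul_mem (r₀ k * t₀ k).2 (t₀ k).2
  · have cancel : rr k * tt k * ttInv k = rr k := by linear_combination rr k * tt_mul_ttInv k
    exact Set.mem_of_eq_of_mem cancel (r₀ k).2

theorem exists_pow_smul_mem_M₀_of_mem_M₃ (hchar : ringChar k ≠ 2) {x : Loc k} (hx : x ∈ M₃ k) :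
    ∃ n : ℕ, (s₀ k * t₀ k) ^ n • x ∈ M₀ k := by
  refine exists_pow_smul_mem_of_mem_span_adjoin (s₀ k * t₀ k) ?_
    (Set.forall_mem_range.2 fun j ↦ ⟨2, sq_smul_g₃_mem_M₀ k hchar j⟩) hx
  rintro _ (rfl | rfl | rfl | rfl | rfl)
  · exact mul_mem (s₀ k * t₀ k).2 (r₀ k).2
  · exact mul_mem (s₀ k * t₀ k).2 (s₀ k).2
  · have cancel : ss k * tt k * ssInv k = tt k := by linear_combination tt k * ss_mul_ssInv k
    exact Set.mem_of_eq_of_mem cancel (t₀ k).2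
  · exact mul_mem (s₀ k * t₀ k).2 (t₀ k).2
  · have cancel : ss k * tt k * ttInv k = ss k := by linear_combination ss k * tt_mul_ttInv k
    exact Set.mem_of_eq_of_mem cancel (s₀ k).2

/-- Exponents of `u, v, u', v'` in the monomial of which `g₁ j` is a multiple by a power of `t`. -/
def g₁Exponent : Fin 9 → Fin 4 → ℕ :=
  ![![2, 0, 2, 0], ![2, 0, 1, 1], ![2, 0, 0, 2],
    ![1, 1, 2, 0], ![1, 1, 1, 1], ![1, 1, 0, 2],
    ![0, 2, 2, 0], ![0, 2, 1, 1], ![0, 2, 0, 2]]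

theorem linearIndependent_g₁ : LinearIndependent (A₀ k) (g₁ k) := by
  have hmon := linearIndependent_prod_pow (algebraicIndependent_uu_vv k) (α := g₁Exponent)
    (by decide)
  have ht (j : Fin 9) : t₀ k ^ (![2, 1, 2, 1, 0, 1, 2, 1, 2] j) ≠ 0 :=
    pow_ne_zero _ (r₀_s₀_t₀_ne_zero k 2)
  refine linearIndependent_of_smul_mem_span hmon ht fun j ↦ Submodule.subset_span ⟨j, ?_⟩
  fin_cases j <;>
    simp [g₁, g₁Exponent, Fin.prod_univ_four, Subalgebra.smul_def, t₀, ← mul_assoc]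

theorem linearIndependent_g₀ (hchar : ringChar k ≠ 2) : LinearIndependent (A₀ k) (g₀ k) :=
  linearIndependent_of_smul_mem_span (linearIndependent_g₁ k)
    (fun _ ↦ pow_ne_zero 2 (mul_ne_zero (r₀_s₀_t₀_ne_zero k 0) (r₀_s₀_t₀_ne_zero k 1)))
    (sq_smul_g₁_mem_M₀ k hchar)

/-- `M₁ ∩ M₂ ∩ M₃ = M₀` as subsets of the localization, and the nine
generators of `M₀` are linearly independent over `k[r,s,t]`, so they form a basis of the
intersection, which is therefore free of rank `9`. -/
theorem intersection_eq_and_free (hchar : ringChar k ≠ 2) :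
    ((M₁ k : Set (Loc k)) ∩ (M₂ k : Set (Loc k)) ∩ (M₃ k : Set (Loc k))
        = (M₀ k : Set (Loc k))) ∧
      LinearIndependent (A₀ k) (g₀ k) := by
  refine ⟨Set.Subset.antisymm ?_ ?_, linearIndependent_g₀ k hchar⟩
  · rintro x ⟨⟨h₁, h₂⟩, h₃⟩
    obtain ⟨l, hl⟩ := exists_pow_smul_mem_M₀_of_mem_M₁ k hchar h₁
    obtain ⟨m, hm⟩ := exists_pow_smul_mem_M₀_of_mem_M₂ k hchar h₂
    obtain ⟨n, hn⟩ := exists_pow_smul_mem_M₀_of_mem_M₃ k hchar h₃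
    have hrs : IsRelPrime (r₀ k) (s₀ k) := pairwise_isRelPrime k (i := 0) (j := 1) (by decide)
    have hrt : IsRelPrime (r₀ k) (t₀ k) := pairwise_isRelPrime k (i := 0) (j := 2) (by decide)
    have hst : IsRelPrime (s₀ k) (t₀ k) := pairwise_isRelPrime k (i := 1) (j := 2) (by decide)
    have hr : IsSMulRegular (Loc k) (r₀ k) := .of_ne_zero (r₀_s₀_t₀_ne_zero k 0)
    have hs : IsSMulRegular (Loc k) (s₀ k) := .of_ne_zero (r₀_s₀_t₀_ne_zero k 1)
    exact mem_span_range_of_pow_mul_smul_mem (linearIndependent_g₀ k hchar)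
      hrs hrt hst hr hs hl hm hn
  · exact Set.subset_inter (Set.subset_inter (M₀_subset_M₁ k) (M₀_subset_M₂ k hchar))
      (M₀_subset_M₃ k hchar)

end Stmt5
end
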